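/- arXiv:2212.14839 — 3 statements merged into one kernel-verified Lean document; each statement's English description precedes it below -/
import Mathlib

section
/- Let C ⊂ ℝ² be a centrally symmetric convex body and let H ⊂ ℝ² be a centrally symmetric convex hexagon or a parallelogram. Then there exists a full-rank lattice Λ ⊂ ℝ² such that the translates {C + λ : λ ∈ Λ} have pairwise disjoint interiors and covol(Λ) ≤ (C,H)² / |H|, where (C,H) := (|C+H| − |C| − |H|)/2 is the mixed area. (Equivalently, (C,H) ≥ √(|C| |H| / δ_L(C)) where δ_L(C) is the lattice packing density of C.) -/
open MeasureTheory Pointwise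

/-- The covolume of the full-rank lattice generated by the columns of `M`. -/
noncomputable def covol {n : ℕ} (M : Matrix (Fin n) (Fin n) ℝ) : ℝ := |M.det|

/-- The set of points of the lattice generated by the columns of `M`. -/
def latticePoints {n : ℕ} (M : Matrix (Fin n) (Fin n) ℝ) : Set (Fin n → ℝ) :=
  {v | ∃ z : Fin n → ℤ, v = M.mulVec (fun i => (z i : ℝ))}

/-- `M` generates a full-rank lattice whose translates of `K` have pairwise
disjoint interiors. -/
def IsLatticePacking {n : ℕ} (M : Matrix (Fin n) (Fin n) ℝ)
    (K : Set (Fin n → ℝ)) : Prop :=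
  M.det ≠ 0 ∧ ∀ l ∈ latticePoints M, ∀ l' ∈ latticePoints M, l ≠ l' →
    Disjoint (interior (l +ᵥ K)) (interior (l' +ᵥ K))

/-- `H` is a centrally symmetric convex hexagon: the convex hull of six points
`A₁, …, A₆` with `A_{i+3} = -A_i`, not contained in a line. -/
def IsSymmHexagon (H : Set (Fin 2 → ℝ)) : Prop :=
  ∃ A : Fin 3 → (Fin 2 → ℝ),
    H = convexHull ℝ {A 0, A 1, A 2, -A 0, -A 1, -A 2} ∧ ¬ Collinear ℝ H

/-- `H` is a parallelogram: the convex hull of four points `B, B', -B, -B'`,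
not contained in a line. -/
def IsParallelogram (H : Set (Fin 2 → ℝ)) : Prop :=
  ∃ B B' : Fin 2 → ℝ,
    H = convexHull ℝ {B, B', -B, -B'} ∧ ¬ Collinear ℝ H

/-- The mixed area `(C, H) = (|C + H| - |C| - |H|) / 2` of two planar bodies,
where `C + H` is the Minkowski sum. -/
noncomputable def mixedArea (C H : Set (Fin 2 → ℝ)) : ℝ :=
  ((volume (C + H)).toReal - (volume C).toReal - (volume H).toReal) / 2

open Set

/-- The planar determinant. -/
def dt (a x : Fin 2 → ℝ) : ℝ := a 0 * x 1 - a 1 * x 0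

/-- The segment from `-a` to `a`. -/
def sg (a : Fin 2 → ℝ) : Set (Fin 2 → ℝ) := (fun t : ℝ => t • a) '' Icc (-1) 1

/-- `h` is the support value of the symmetric set `K` with respect to `dt a`. -/
def IsSupp (K : Set (Fin 2 → ℝ)) (a : Fin 2 → ℝ) (h : ℝ) : Prop :=
  (∀ x ∈ K, |dt a x| ≤ h) ∧ ∃ x ∈ K, dt a x = h

lemma dt_add (a x y : Fin 2 → ℝ) : dt a (x + y) = dt a x + dt a y := by
  simp [dt]; ring

lemma dt_smul (a x : Fin 2 → ℝ) (t : ℝ) : dt a (t • x) = t * dt a x := by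
  simp [dt]; ring

lemma dt_neg (a x : Fin 2 → ℝ) : dt a (-x) = - dt a x := by
  simp [dt]; ring

lemma dt_continuous (a : Fin 2 → ℝ) : Continuous (dt a) := by
  unfold dt; fun_prop

lemma sg_compact (a : Fin 2 → ℝ) : IsCompact (sg a) :=
  isCompact_Icc.image (by fun_prop)

lemma sg_convex (a : Fin 2 → ℝ) : Convex ℝ (sg a) := by
  rintro _ ⟨s, hs, rfl⟩ _ ⟨t, ht, rfl⟩ u v hu hv huv
  refine ⟨u * s + v * t, (convex_Icc (-1 : ℝ) 1) hs ht hu hv huv, ?_⟩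
  simp only [smul_smul, add_smul]

lemma sg_symm (a : Fin 2 → ℝ) {x : Fin 2 → ℝ} (hx : x ∈ sg a) : -x ∈ sg a := by
  obtain ⟨s, hs, rfl⟩ := hx
  exact ⟨-s, ⟨by linarith [hs.2], by linarith [hs.1]⟩, by simp⟩

lemma symm_mem {K : Set (Fin 2 → ℝ)} (hc : Convex ℝ K) (hs : ∀ x ∈ K, -x ∈ K)
    {x : Fin 2 → ℝ} (hx : x ∈ K) {c : ℝ} (h1 : -1 ≤ c) (h2 : c ≤ 1) : c • x ∈ K := by
  have := hc hx (hs x hx) (a := (1 + c) / 2) (b := (1 - c) / 2) (by linarith) (by linarith) (by ring)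
  convert this using 1
  ext i; simp; ring

lemma IsSupp.nonneg {K : Set (Fin 2 → ℝ)} {a : Fin 2 → ℝ} {h : ℝ} (H : IsSupp K a h) : 0 ≤ h := by
  obtain ⟨H1, x, hx, rfl⟩ := H
  exact (abs_nonneg _).trans (H1 x hx)

lemma exists_supp {K : Set (Fin 2 → ℝ)} (hK : IsCompact K) (hne : K.Nonempty)
    (hs : ∀ x ∈ K, -x ∈ K) (a : Fin 2 → ℝ) : ∃ h, IsSupp K a h := by
  obtain ⟨x, hx, hm⟩ := hK.exists_isMaxOn hne (dt_continuous a).continuousOn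
  refine ⟨dt a x, fun y hy => abs_le.2 ⟨?_, hm hy⟩, x, hx, rfl⟩
  have := hm (hs y hy)
  simp only [mem_ofPred_eq, dt_neg] at this
  linarith

lemma IsSupp.add_sg {K : Set (Fin 2 → ℝ)} {a : Fin 2 → ℝ} {h : ℝ} (H : IsSupp K a h)
    (b : Fin 2 → ℝ) : IsSupp (K + sg b) a (h + |dt a b|) := by
  obtain ⟨H1, x, hx, hxh⟩ := H
  constructor
  · rintro _ ⟨y, hy, _, ⟨t, ht, rfl⟩, rfl⟩
    simp only [dt_add, dt_smul]
    refine (abs_add_le _ _).trans (add_le_add (H1 y hy) ?_)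
    rw [abs_mul]
    exact mul_le_of_le_one_left (abs_nonneg _) (abs_le.2 ht)
  · rcases le_total 0 (dt a b) with h0 | h0
    · refine ⟨x + (1 : ℝ) • b, add_mem_add hx ⟨1, by simp, rfl⟩, ?_⟩
      rw [dt_add, dt_smul, abs_of_nonneg h0, hxh]; ring
    · refine ⟨x + (-1 : ℝ) • b, add_mem_add hx ⟨-1, by simp, rfl⟩, ?_⟩
      rw [dt_add, dt_smul, abs_of_nonpos h0, hxh]; ring

/-- Slice coordinates adapted to `a, b`. -/
lemma slice_mp (a b : Fin 2 → ℝ) (hab : dt a b = 1) :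
    MeasurePreserving (fun p : ℝ × ℝ => p.1 • a + p.2 • b) volume volume := by
  let M : Matrix (Fin 2) (Fin 2) ℝ := !![a 0, b 0; a 1, b 1]
  have hM : M.det = 1 := by
    simp only [M, Matrix.det_fin_two_of]; unfold dt at hab; linarith
  have h1 : MeasurePreserving (Matrix.toLin' M) (volume : Measure (Fin 2 → ℝ)) volume := by
    refine ⟨(LinearMap.continuous_of_finiteDimensional _).measurable, ?_⟩
    rw [Real.map_matrix_volume_pi_eq_smul_volume_pi (by rw [hM]; norm_num), hM]
    simp
  have h2 := h1.comp (volume_preserving_finTwoArrow ℝ).symm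
  convert h2 using 1
  ext p i
  fin_cases i <;> simp [M, Matrix.mulVec, dotProduct, Fin.sum_univ_two] <;> ring

lemma vol_slices (a b : Fin 2 → ℝ) (hab : dt a b = 1) {K : Set (Fin 2 → ℝ)} (hK : IsCompact K) :
    volume K = ∫⁻ s : ℝ, volume {t : ℝ | t • a + s • b ∈ K} := by
  have h := slice_mp a b hab
  rw [← h.measure_preimage hK.measurableSet.nullMeasurableSet]
  rw [Measure.volume_eq_prod, Measure.prod_apply_symm (h.measurable hK.measurableSet)]
  rfl

lemma steiner {K : Set (Fin 2 → ℝ)} (hK : IsCompact K) (hc : Convex ℝ K)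
    (hs : ∀ x ∈ K, -x ∈ K) {a : Fin 2 → ℝ} {h : ℝ} (H : IsSupp K a h) :
    volume (K + sg a) = volume K + ENNReal.ofReal (4 * h) := by
  by_cases ha : a = 0
  · have hh : h = 0 := by
      obtain ⟨-, x, -, rfl⟩ := H
      simp [dt, ha]
    have : sg a = {0} := by
      ext x; constructor
      · rintro ⟨t, -, rfl⟩; simp [ha]
      · rintro rfl; exact ⟨0, by simp, by simp⟩
    rw [this]; simp [hh]
  have hn : 0 < a 0 ^ 2 + a 1 ^ 2 := by
    by_contra hcon
    apply ha
    have h0 : a 0 = 0 := by nlinarith [sq_nonneg (a 0), sq_nonneg (a 1)]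
    have h1 : a 1 = 0 := by nlinarith [sq_nonneg (a 0), sq_nonneg (a 1)]
    ext i; fin_cases i <;> simp [h0, h1]
  obtain ⟨b, hab⟩ : ∃ b, dt a b = 1 := by
    refine ⟨![-a 1 / (a 0 ^ 2 + a 1 ^ 2), a 0 / (a 0 ^ 2 + a 1 ^ 2)], ?_⟩
    simp [dt]; field_simp; ring
  have hdec : ∀ y : Fin 2 → ℝ, y = (dt y b) • a + (dt a y) • b := by
    intro y
    have e : a 0 * b 1 - a 1 * b 0 = 1 := hab
    ext i; fin_cases i
    · simp [dt]; linear_combination (-y 0) * e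
    · simp [dt]; linear_combination (-y 1) * e
  have hda : ∀ t s : ℝ, dt a (t • a + s • b) = s := by
    intro t s
    rw [dt_add, dt_smul, dt_smul, hab]; simp [dt, mul_comm]
  rw [vol_slices a b hab (hK.add (sg_compact a)), vol_slices a b hab hK]
  have key : ∀ s : ℝ, volume {t : ℝ | t • a + s • b ∈ K + sg a} =
      volume {t : ℝ | t • a + s • b ∈ K} + (Icc (-h) h).indicator (fun _ => (2 : ENNReal)) s := by
    intro s
    set T := {t : ℝ | t • a + s • b ∈ K} with hT
    have hsl : {t : ℝ | t • a + s • b ∈ K + sg a} = T + Icc (-1) 1 := by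
      ext t; constructor
      · rintro ⟨y, hy, _, ⟨r, hr, rfl⟩, e⟩
        refine ⟨t - r, ?_, r, hr, by simp⟩
        have : y = t • a + s • b - r • a := by
          rw [← e]; simp
        simp only [hT, mem_ofPred_eq]
        convert hy using 1
        rw [this, sub_smul]; abel
      · rintro ⟨t', ht', r, hr, rfl⟩
        refine ⟨_, ht', _, ⟨r, hr, rfl⟩, ?_⟩
        simp only [add_smul]; abel
    rw [hsl]
    by_cases hsh : s ∈ Icc (-h) h
    · rw [indicator_of_mem hsh]
      have hne : T.Nonempty := by
        obtain ⟨-, x, hx, hxh⟩ := H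
        obtain ⟨c, hc1, hc2, hcs⟩ : ∃ c : ℝ, -1 ≤ c ∧ c ≤ 1 ∧ c * h = s := by
          rcases eq_or_ne h 0 with h0 | h0
          · refine ⟨0, by norm_num, by norm_num, ?_⟩
            subst h0; linarith [hsh.1, hsh.2]
          · have hp : 0 < h := lt_of_le_of_ne (by linarith [hsh.1, hsh.2]) h0.symm
            refine ⟨s / h, ?_, ?_, by field_simp⟩
            · rw [le_div_iff₀ hp]; linarith [hsh.1]
            · rw [div_le_iff₀ hp]; linarith [hsh.2]
        have hm := symm_mem hc hs hx hc1 hc2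
        refine ⟨dt (c • x) b, ?_⟩
        have e := hdec (c • x)
        have e2 : dt a (c • x) = s := by rw [dt_smul, hxh, hcs]
        rw [e2] at e
        simp only [hT, mem_ofPred_eq]
        rw [← e]; exact hm
      have hTc : IsClosed T := hK.isClosed.preimage (by fun_prop)
      have hTconv : Convex ℝ T := by
        intro t ht t' ht' u v hu hv huv
        have := hc ht ht' hu hv huv
        simp only [hT, mem_ofPred_eq]
        convert this using 1
        simp only [smul_add, smul_smul, add_smul, smul_eq_mul]
        have : s • b = (u * s) • b + (v * s) • b := by
          rw [← add_smul, ← add_mul, huv, one_mul]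
        rw [this]; abel
      have hTcomp : IsCompact T := by
        have : T ⊆ (fun y => dt y b) '' K := by
          intro t ht
          refine ⟨_, ht, ?_⟩
          have e : a 0 * b 1 - a 1 * b 0 = 1 := hab
          simp [dt]; linear_combination t * e
        exact (hK.image (by unfold dt; fun_prop)).of_isClosed_subset hTc this
      have hconn : T.OrdConnected := hTconv.ordConnected
      have hTI : T = Icc (sInf T) (sSup T) := by
        apply eq_Icc_of_connected_compact ⟨hne, hTconv.isPreconnected⟩ hTcomp
      have hle : sInf T ≤ sSup T := by
        rw [hTI] at hne; exact nonempty_Icc.1 hne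
      have hadd : T + Icc (-1 : ℝ) 1 = Icc (sInf T - 1) (sSup T + 1) := by
        conv_lhs => rw [hTI]
        rw [Icc_add_Icc hle (by norm_num)]
        rfl
      rw [hadd]
      conv_rhs => rw [hTI]
      rw [Real.volume_Icc, Real.volume_Icc]
      rw [show (2 : ENNReal) = ENNReal.ofReal 2 by simp, ← ENNReal.ofReal_add (by linarith) (by norm_num)]
      congr 1; ring
    · rw [indicator_of_notMem hsh]
      have : T = ∅ := by
        rw [eq_empty_iff_forall_notMem]
        intro t ht
        have := H.1 _ ht
        rw [hda] at this
        exact hsh (abs_le.1 this)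
      rw [this]; simp
  simp_rw [key]
  rw [lintegral_add_right _ (measurable_const.indicator measurableSet_Icc),
    lintegral_indicator measurableSet_Icc]
  congr 1
  have h0 := H.nonneg
  simp only [lintegral_const, Measure.restrict_apply, MeasurableSet.univ, univ_inter, Real.volume_Icc]
  rw [show (2 : ENNReal) = ENNReal.ofReal 2 by simp, ← ENNReal.ofReal_mul (by norm_num)]
  congr 1; ring

lemma add_symm {K : Set (Fin 2 → ℝ)} (hs : ∀ x ∈ K, -x ∈ K) (a : Fin 2 → ℝ) :
    ∀ x ∈ K + sg a, -x ∈ K + sg a := by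
  rintro _ ⟨y, hy, z, hz, rfl⟩
  exact ⟨-y, hs y hy, -z, sg_symm a hz, by simp [add_comm]⟩

lemma vol_add {K : Set (Fin 2 → ℝ)} (hK : IsCompact K) (hc : Convex ℝ K)
    (hs : ∀ x ∈ K, -x ∈ K) {x y z : Fin 2 → ℝ} {hx hy hz : ℝ} (Hx : IsSupp K x hx)
    (Hy : IsSupp K y hy) (Hz : IsSupp K z hz) :
    (volume (K + (sg x + sg y + sg z))).toReal =
      (volume K).toReal + 4 * (hx + hy + hz) + 4 * (|dt x y| + |dt x z| + |dt y z|) := by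
  have c1 := hK.add (sg_compact x)
  have c2 := c1.add (sg_compact y)
  have v1 := hc.add (sg_convex x)
  have v2 := v1.add (sg_convex y)
  have s1 := add_symm hs x
  have s2 := add_symm s1 y
  have e1 := steiner hK hc hs Hx
  have e2 := steiner c1 v1 s1 (Hy.add_sg x)
  have e3 := steiner c2 v2 s2 ((Hz.add_sg x).add_sg y)
  rw [← add_assoc, ← add_assoc, e3, e2, e1]
  have p1 := Hx.nonneg
  have p2 := Hy.nonneg
  have p3 := Hz.nonneg
  have q1 := abs_nonneg (dt y x)
  have q2 := abs_nonneg (dt z x)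
  have q3 := abs_nonneg (dt z y)
  have fin := hK.measure_lt_top (μ := volume)
  rw [ENNReal.toReal_add (by finiteness) (by finiteness), ENNReal.toReal_add (by finiteness) (by finiteness),
    ENNReal.toReal_add (by finiteness) (by finiteness), ENNReal.toReal_ofReal (by positivity),
    ENNReal.toReal_ofReal (by positivity), ENNReal.toReal_ofReal (by positivity)]
  have r1 : |dt y x| = |dt x y| := by rw [← abs_neg]; congr 1; simp [dt]; ring
  have r2 : |dt z x| = |dt x z| := by rw [← abs_neg]; congr 1; simp [dt]; ring
  have r3 : |dt z y| = |dt y z| := by rw [← abs_neg]; congr 1; simp [dt]; ring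
  rw [r1, r2, r3]; ring

lemma supp_strict {K : Set (Fin 2 → ℝ)} {a : Fin 2 → ℝ} (ha : a ≠ 0) {h : ℝ} (H : IsSupp K a h)
    {c : Fin 2 → ℝ} (hc : c ∈ interior K) : dt a c < h := by
  have hn : 0 < a 0 ^ 2 + a 1 ^ 2 := by
    by_contra hcon
    apply ha
    have h0 : a 0 = 0 := by nlinarith [sq_nonneg (a 0), sq_nonneg (a 1)]
    have h1 : a 1 = 0 := by nlinarith [sq_nonneg (a 0), sq_nonneg (a 1)]
    ext i; fin_cases i <;> simp [h0, h1]
  let v : Fin 2 → ℝ := ![-a 1, a 0]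
  have hv : dt a v = a 0 ^ 2 + a 1 ^ 2 := by simp [dt, v]; ring
  have hcont : Filter.Tendsto (fun t : ℝ => c + t • v) (nhdsWithin 0 (Ioi 0)) (nhds c) := by
    have : Continuous (fun t : ℝ => c + t • v) := by fun_prop
    have h := this.tendsto 0
    simp only [zero_smul, add_zero] at h
    exact h.mono_left nhdsWithin_le_nhds
  have ev := hcont.eventually (mem_interior_iff_mem_nhds.1 hc)
  obtain ⟨t, htK, ht⟩ := (ev.and self_mem_nhdsWithin).exists
  have := (abs_le.1 (H.1 _ htK)).2
  rw [dt_add, dt_smul, hv] at this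
  have : 0 < t * (a 0 ^ 2 + a 1 ^ 2) := mul_pos ht hn
  linarith

lemma interior_symm {K : Set (Fin 2 → ℝ)} (hs : K = -K) {c : Fin 2 → ℝ} (hc : c ∈ interior K) :
    -c ∈ interior K := by
  have h := (Homeomorph.neg (Fin 2 → ℝ)).preimage_interior K
  simp only [Homeomorph.coe_neg] at h
  have h2 : Neg.neg ⁻¹' K = K := by
    conv_rhs => rw [hs]
    rfl
  rw [h2] at h
  rw [← h] at hc
  exact hc

lemma supp_pos {K : Set (Fin 2 → ℝ)} {a : Fin 2 → ℝ} (ha : a ≠ 0) {h : ℝ} (H : IsSupp K a h)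
    (hs : K = -K) (hi : (interior K).Nonempty) : 0 < h := by
  obtain ⟨c, hc⟩ := hi
  have h1 := supp_strict ha H hc
  have h2 := supp_strict ha H (interior_symm hs hc)
  rw [dt_neg] at h2
  linarith

/-- Packing criterion. -/
lemma packing_of {K : Set (Fin 2 → ℝ)} (hs : K = -K) (M : Matrix (Fin 2) (Fin 2) ℝ)
    (hM : M.det ≠ 0)
    (hl : ∀ m n : ℤ, (m ≠ 0 ∨ n ≠ 0) → ∃ a h, a ≠ 0 ∧ IsSupp K a h ∧
      2 * h ≤ |dt a (M.mulVec ![(m : ℝ), (n : ℝ)])|) : IsLatticePacking M K := by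
  refine ⟨hM, ?_⟩
  rintro _ ⟨z, rfl⟩ _ ⟨w, rfl⟩ hne
  rw [Set.disjoint_left]
  intro p hp hp'
  rw [interior_vadd] at hp hp'
  obtain ⟨c, hc, e⟩ := hp
  obtain ⟨c', hc', e'⟩ := hp'
  have hzw : z 0 - w 0 ≠ 0 ∨ z 1 - w 1 ≠ 0 := by
    by_contra hcon
    push Not at hcon
    apply hne
    have : z = w := by
      ext i; fin_cases i
      · simpa using sub_eq_zero.1 hcon.1
      · simpa using sub_eq_zero.1 hcon.2
    rw [this]
  obtain ⟨a, h, ha, H, hge⟩ := hl _ _ hzw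
  have hsub : M.mulVec ![((z 0 - w 0 : ℤ) : ℝ), ((z 1 - w 1 : ℤ) : ℝ)] = c' + - c := by
    have e1 : ![((z 0 - w 0 : ℤ) : ℝ), ((z 1 - w 1 : ℤ) : ℝ)] =
        (fun i => (z i : ℝ)) - (fun i => (w i : ℝ)) := by
      ext i; fin_cases i <;> simp
    rw [e1, Matrix.mulVec_sub]
    have : M.mulVec (fun i => (z i : ℝ)) + c = M.mulVec (fun i => (w i : ℝ)) + c' := by
      simp only [vadd_eq_add] at e e'
      rw [e, e']
    rw [← sub_eq_add_neg, sub_eq_sub_iff_add_eq_add, this, add_comm]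
  rw [hsub, dt_add, dt_neg] at hge
  have h1 := supp_strict ha H hc
  have h2 := supp_strict ha H hc'
  have h3 := supp_strict ha H (interior_symm hs hc)
  have h4 := supp_strict ha H (interior_symm hs hc')
  rw [dt_neg] at h3 h4
  have : |dt a c' + -dt a c| < 2 * h := abs_lt.2 ⟨by linarith, by linarith⟩
  linarith

/-- The matrix with columns `l` such that `(dt x l, dt y l)` is `(U₁,V₁)`, `(U₂,V₂)`. -/
lemma exists_matrix (x y : Fin 2 → ℝ) (hxy : dt x y ≠ 0) (U₁ V₁ U₂ V₂ : ℝ) :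
    ∃ M : Matrix (Fin 2) (Fin 2) ℝ, |M.det| = |U₁ * V₂ - V₁ * U₂| / |dt x y| ∧
      ∀ m n : ℝ, dt x (M.mulVec ![m, n]) = U₁ * m + U₂ * n ∧
        dt y (M.mulVec ![m, n]) = V₁ * m + V₂ * n := by
  refine ⟨!![(U₁ * y 0 - V₁ * x 0) / dt x y, (U₂ * y 0 - V₂ * x 0) / dt x y;
    (U₁ * y 1 - V₁ * x 1) / dt x y, (U₂ * y 1 - V₂ * x 1) / dt x y], ?_, ?_⟩
  · rw [← abs_div, Matrix.det_fin_two_of]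
    congr 1
    have hd : dt x y = x 0 * y 1 - x 1 * y 0 := rfl
    field_simp
    rw [hd]; ring
  · intro m n
    have hd : dt x y = x 0 * y 1 - x 1 * y 0 := rfl
    generalize dt x y = D at *
    constructor
    · conv_lhs => unfold dt
      simp only [Matrix.mulVec, dotProduct, Fin.sum_univ_two, Matrix.of_apply, Matrix.cons_val_zero,
        Matrix.cons_val_one, Matrix.cons_val']
      field_simp
      rw [hd]; ring
    · conv_lhs => unfold dt
      simp only [Matrix.mulVec, dotProduct, Fin.sum_univ_two, Matrix.of_apply, Matrix.cons_val_zero,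
        Matrix.cons_val_one, Matrix.cons_val']
      field_simp
      rw [hd]; ring

lemma one_le_abs_int {m : ℤ} (h : m ≠ 0) : (1 : ℝ) ≤ |(m : ℝ)| := by
  exact_mod_cast Int.one_le_abs h

/-- Degenerate case: two directions. -/
lemma lattice_two {K : Set (Fin 2 → ℝ)} (hs : K = -K) (hi : (interior K).Nonempty)
    {x y z : Fin 2 → ℝ} {hx hy hz : ℝ} (Hx : IsSupp K x hx)
    (Hy : IsSupp K y hy) (Hz : IsSupp K z hz) (hxy : dt x y ≠ 0) (hyz : dt y z = 0) :
    ∃ M : Matrix (Fin 2) (Fin 2) ℝ, IsLatticePacking M K ∧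
      |M.det| ≤ (hx + hy + hz) ^ 2 / (|dt x y| + |dt x z| + |dt y z|) := by
  have hx0 : x ≠ 0 := by rintro rfl; simp [dt] at hxy
  have hy0 : y ≠ 0 := by rintro rfl; simp [dt] at hxy
  have px := supp_pos hx0 Hx hs hi
  have py := supp_pos hy0 Hy hs hi
  obtain ⟨k, rfl⟩ : ∃ k : ℝ, z = k • y := by
    refine ⟨dt x z / dt x y, ?_⟩
    have hd : dt x y = x 0 * y 1 - x 1 * y 0 := rfl
    have hd' : dt x z = x 0 * z 1 - x 1 * z 0 := rfl
    have e : y 0 * z 1 - y 1 * z 0 = 0 := hyz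
    ext i; fin_cases i
    · simp; field_simp; rw [hd, hd']; linear_combination (-x 0) * e
    · simp; field_simp; rw [hd, hd']; linear_combination (-x 1) * e
  have hdk : ∀ w, dt (k • y) w = k * dt y w := by intro w; simp [dt]; ring
  have hzk : hz = |k| * hy := by
    apply le_antisymm
    · obtain ⟨-, c, hc, rfl⟩ := Hz
      rw [hdk]
      refine (le_abs_self _).trans ?_
      rw [abs_mul]
      exact mul_le_mul_of_nonneg_left (Hy.1 c hc) (abs_nonneg _)
    · obtain ⟨-, c, hc, hcy⟩ := Hy
      have := Hz.1 c hc
      rw [hdk, abs_mul, hcy, abs_of_pos py] at this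
      exact this
  obtain ⟨M, hM, hMl⟩ := exists_matrix x y hxy (2 * hx) 0 0 (2 * hy)
  have hdp : 0 < |dt x y| := abs_pos.2 hxy
  have hM' : |M.det| = 4 * hx * hy / |dt x y| := by
    rw [hM]; congr 1
    rw [abs_of_pos (by nlinarith [mul_pos px py])]; ring
  refine ⟨M, packing_of hs M ?_ ?_, ?_⟩
  · rw [← abs_pos, hM']; positivity
  · rintro m n (h | h)
    · refine ⟨x, hx, hx0, Hx, ?_⟩
      rw [(hMl _ _).1, zero_mul, add_zero, abs_mul, abs_of_pos (by positivity : (0:ℝ) < 2 * hx)]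
      exact le_mul_of_one_le_right (by positivity) (one_le_abs_int h)
    · refine ⟨y, hy, hy0, Hy, ?_⟩
      rw [(hMl _ _).2, zero_mul, zero_add, abs_mul, abs_of_pos (by positivity : (0:ℝ) < 2 * hy)]
      exact le_mul_of_one_le_right (by positivity) (one_le_abs_int h)
  · rw [hM', hyz, dt_smul, abs_mul, abs_zero, hzk]
    have hk := abs_nonneg k
    rw [div_le_div_iff₀ hdp (by positivity)]
    have : 4 * hx * hy * (1 + |k|) ≤ (hx + hy + |k| * hy) ^ 2 := by
      nlinarith [sq_nonneg (hx - hy * (1 + |k|))]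
    nlinarith [mul_le_mul_of_nonneg_right this hdp.le]

lemma key_ineq (a b c x y z : ℝ) (ha : 0 < a) (hb : 0 < b) (hc : 0 < c) :
    (4 * (a * x) * (b * y) - (a * x + b * y - c * z) ^ 2) * (a + b + c) ≤
      (x + y + z) ^ 2 * (a * b * c) := by
  have hpos : 0 < a * (a + b) * (a + c) := by positivity
  rw [← sub_nonneg]
  refine nonneg_of_mul_nonneg_right (a := a * (a + b) * (a + c)) ?_ hpos
  have e : a * (a + b) * (a + c) * ((x + y + z) ^ 2 * (a * b * c) -
      (4 * (a * x) * (b * y) - (a * x + b * y - c * z) ^ 2) * (a + b + c)) =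
      (a * (a + b) * (a + c) * x - a * b * (a + b) * y - a * c * (a + c) * z) ^ 2 +
      a * b * c * (a + b + c) * ((a + b) * y - (a + c) * z) ^ 2 := by ring
  rw [e]; positivity

/-- The integer combinatorics of the hexagonal lattice. -/
lemma comb {p q r : ℝ} (hp : 0 ≤ p) (hq : 0 ≤ q) (h1 : r ≤ p + q) (h2 : p ≤ q + r)
    (h3 : q ≤ p + r) (m n : ℤ) (hmn : m ≠ 0 ∨ n ≠ 0) :
    2 * p ≤ |2 * p * m + -(p + q - r) * n| ∨ 2 * q ≤ |-(p + q - r) * m + 2 * q * n| ∨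
    2 * r ≤ |2 * p * m + -(p + q - r) * n + (-(p + q - r) * m + 2 * q * n)| := by
  by_cases hm : m = 0
  · right; left
    have hn : n ≠ 0 := by tauto
    subst hm
    simp only [Int.cast_zero, mul_zero, zero_add]
    rw [abs_mul, abs_of_nonneg (by positivity : (0:ℝ) ≤ 2 * q)]
    exact le_mul_of_one_le_right (by positivity) (one_le_abs_int hn)
  by_cases hn : n = 0
  · left
    subst hn
    simp only [Int.cast_zero, mul_zero, add_zero]
    rw [abs_mul, abs_of_nonneg (by positivity : (0:ℝ) ≤ 2 * p)]
    exact le_mul_of_one_le_right (by positivity) (one_le_abs_int hm)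
  rcases lt_or_gt_of_ne hm with hm | hm <;> rcases lt_or_gt_of_ne hn with hn | hn
  · right; right
    have hm' : (m : ℝ) ≤ -1 := by exact_mod_cast Int.le_sub_one_of_lt hm
    have hn' : (n : ℝ) ≤ -1 := by exact_mod_cast Int.le_sub_one_of_lt hn
    rw [← abs_neg]
    refine le_trans ?_ (le_abs_self _)
    nlinarith
  · left
    have hm' : (m : ℝ) ≤ -1 := by exact_mod_cast Int.le_sub_one_of_lt hm
    have hn' : (1 : ℝ) ≤ n := by exact_mod_cast hn
    rw [← abs_neg]
    refine le_trans ?_ (le_abs_self _)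
    nlinarith
  · left
    have hm' : (1 : ℝ) ≤ m := by exact_mod_cast hm
    have hn' : (n : ℝ) ≤ -1 := by exact_mod_cast Int.le_sub_one_of_lt hn
    refine le_trans ?_ (le_abs_self _)
    nlinarith
  · right; right
    have hm' : (1 : ℝ) ≤ m := by exact_mod_cast hm
    have hn' : (1 : ℝ) ≤ n := by exact_mod_cast hn
    refine le_trans ?_ (le_abs_self _)
    nlinarith

/-- Generic case with signs normalised. -/
lemma lattice_three_pos {K : Set (Fin 2 → ℝ)} (hs : K = -K) (hi : (interior K).Nonempty)
    {x y z : Fin 2 → ℝ} {hx hy hz α β γ : ℝ} (Hx : IsSupp K x hx)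
    (Hy : IsSupp K y hy) (Hz : IsSupp K z hz) (hα : 0 < α) (hβ : 0 < β) (hγ : 0 < γ)
    (hxy : |dt x y| = γ) (hrel : ∀ w, α * dt x w + β * dt y w + γ * dt z w = 0)
    (hz0 : z ≠ 0) :
    ∃ M : Matrix (Fin 2) (Fin 2) ℝ, IsLatticePacking M K ∧
      |M.det| ≤ (hx + hy + hz) ^ 2 / (γ + β + α) := by
  have hxy0 : dt x y ≠ 0 := by rw [← abs_pos, hxy]; exact hγ
  have hx0 : x ≠ 0 := by rintro rfl; simp [dt] at hxy0
  have hy0 : y ≠ 0 := by rintro rfl; simp [dt] at hxy0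
  have px := supp_pos hx0 Hx hs hi
  have py := supp_pos hy0 Hy hs hi
  have pz := supp_pos hz0 Hz hs hi
  have t1 : α * hx ≤ β * hy + γ * hz := by
    obtain ⟨-, c, hc, e⟩ := Hx
    have h1 := abs_le.1 (Hy.1 c hc)
    have h2 := abs_le.1 (Hz.1 c hc)
    have := hrel c
    rw [e] at this
    nlinarith [mul_le_mul_of_nonneg_left h1.1 hβ.le, mul_le_mul_of_nonneg_left h2.1 hγ.le]
  have t2 : β * hy ≤ α * hx + γ * hz := by
    obtain ⟨-, c, hc, e⟩ := Hy
    have h1 := abs_le.1 (Hx.1 c hc)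
    have h2 := abs_le.1 (Hz.1 c hc)
    have := hrel c
    rw [e] at this
    nlinarith [mul_le_mul_of_nonneg_left h1.1 hα.le, mul_le_mul_of_nonneg_left h2.1 hγ.le]
  have t3 : γ * hz ≤ α * hx + β * hy := by
    obtain ⟨-, c, hc, e⟩ := Hz
    have h1 := abs_le.1 (Hx.1 c hc)
    have h2 := abs_le.1 (Hy.1 c hc)
    have := hrel c
    rw [e] at this
    nlinarith [mul_le_mul_of_nonneg_left h1.1 hα.le, mul_le_mul_of_nonneg_left h2.1 hβ.le]
  have pp := mul_pos hα px
  have pq := mul_pos hβ py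
  have pr := mul_pos hγ pz
  have hK := key_ineq α β γ hx hy hz hα hβ hγ
  set p := α * hx with hp
  set q := β * hy with hq
  set r := γ * hz with hr
  obtain ⟨M, hM, hMl⟩ := exists_matrix x y hxy0 (2 * p / α) (-(p + q - r) / β)
    (-(p + q - r) / α) (2 * q / β)
  have hpos : 0 < 4 * p * q - (p + q - r) ^ 2 := by
    rcases le_total p q with h | h
    · nlinarith
    · nlinarith
  have hM' : |M.det| = (4 * p * q - (p + q - r) ^ 2) / (α * β * γ) := by
    rw [hM, hxy]
    have : 2 * p / α * (2 * q / β) - -(p + q - r) / β * (-(p + q - r) / α) =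
      (4 * p * q - (p + q - r) ^ 2) / (α * β) := by field_simp; ring
    rw [this, abs_of_pos (by positivity)]
    field_simp
  refine ⟨M, packing_of hs M ?_ ?_, ?_⟩
  · rw [← abs_pos, hM']; positivity
  · intro m n hmn
    have e1 : α * dt x (M.mulVec ![(m : ℝ), (n : ℝ)]) = 2 * p * m + -(p + q - r) * n := by
      rw [(hMl _ _).1]; field_simp
    have e2 : β * dt y (M.mulVec ![(m : ℝ), (n : ℝ)]) = -(p + q - r) * m + 2 * q * n := by
      rw [(hMl _ _).2]; field_simp
    have e3 := hrel (M.mulVec ![(m : ℝ), (n : ℝ)])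
    rcases comb pp.le pq.le t3 t1 t2 m n hmn with h | h | h
    · refine ⟨x, hx, hx0, Hx, ?_⟩
      rw [← e1, abs_mul, abs_of_pos hα] at h
      exact le_of_mul_le_mul_left (by linarith) hα
    · refine ⟨y, hy, hy0, Hy, ?_⟩
      rw [← e2, abs_mul, abs_of_pos hβ] at h
      exact le_of_mul_le_mul_left (by linarith) hβ
    · refine ⟨z, hz, hz0, Hz, ?_⟩
      rw [← e1, ← e2, eq_neg_of_add_eq_zero_left e3, abs_neg, abs_mul, abs_of_pos hγ] at h
      exact le_of_mul_le_mul_left (by linarith) hγ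
  · rw [hM', div_le_div_iff₀ (by positivity) (by positivity)]
    linarith

lemma IsSupp.smul_sign {K : Set (Fin 2 → ℝ)} (hs : K = -K) {a : Fin 2 → ℝ} {h e : ℝ}
    (H : IsSupp K a h) (he : e = 1 ∨ e = -1) : IsSupp K (e • a) h := by
  rcases he with rfl | rfl
  · simpa using H
  · have hd : ∀ w, dt ((-1 : ℝ) • a) w = - dt a w := by intro w; simp [dt]; ring
    obtain ⟨H1, x, hx, e⟩ := H
    refine ⟨fun y hy => by rw [hd, abs_neg]; exact H1 y hy, -x, ?_, ?_⟩
    · rw [hs]; simpa using hx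
    · rw [hd, dt_neg, e]; ring

lemma sign_ex (t : ℝ) : ∃ e : ℝ, (e = 1 ∨ e = -1) ∧ |t| * e = t := by
  rcases le_total 0 t with h | h
  · exact ⟨1, Or.inl rfl, by rw [abs_of_nonneg h]; ring⟩
  · exact ⟨-1, Or.inr rfl, by rw [abs_of_nonpos h]; ring⟩

lemma lattice_one {K : Set (Fin 2 → ℝ)} (hs : K = -K) (hi : (interior K).Nonempty)
    {x y z : Fin 2 → ℝ} {hx hy hz : ℝ} (Hx : IsSupp K x hx)
    (Hy : IsSupp K y hy) (Hz : IsSupp K z hz) (hxy : dt x y ≠ 0) :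
    ∃ M : Matrix (Fin 2) (Fin 2) ℝ, IsLatticePacking M K ∧
      |M.det| ≤ (hx + hy + hz) ^ 2 / (|dt x y| + |dt x z| + |dt y z|) := by
  by_cases hyz : dt y z = 0
  · exact lattice_two hs hi Hx Hy Hz hxy hyz
  have r1 : dt y x = - dt x y := by simp [dt]; ring
  by_cases hxz : dt x z = 0
  · obtain ⟨M, h1, h2⟩ := lattice_two hs hi Hy Hx Hz (by rw [r1]; exact neg_ne_zero.2 hxy) hxz
    refine ⟨M, h1, h2.trans (le_of_eq ?_)⟩
    rw [r1, abs_neg]; congr 1 <;> ring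
  obtain ⟨e1, he1, f1⟩ := sign_ex (dt y z)
  obtain ⟨e2, he2, f2⟩ := sign_ex (-dt x z)
  obtain ⟨e3, he3, f3⟩ := sign_ex (dt x y)
  have habs : ∀ e : ℝ, (e = 1 ∨ e = -1) → |e| = 1 := by
    rintro e (rfl | rfl) <;> simp
  have hz0 : z ≠ 0 := by rintro rfl; simp [dt] at hyz
  have hd : ∀ (e : ℝ) (v w : Fin 2 → ℝ), dt (e • v) w = e * dt v w := by
    intro e v w; simp [dt]; ring
  refine lattice_three_pos hs hi (Hx.smul_sign hs he1) (Hy.smul_sign hs he2)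
    (Hz.smul_sign hs he3) (α := |dt y z|) (β := |dt x z|) (γ := |dt x y|) (abs_pos.2 hyz)
    (abs_pos.2 hxz) (abs_pos.2 hxy) ?_ ?_ ?_
  · rw [hd, dt_smul, abs_mul, abs_mul, habs _ he1, habs _ he2]; ring
  · intro w
    rw [hd, hd, hd, ← mul_assoc, ← mul_assoc, ← mul_assoc, f1, f3, ← abs_neg (dt x z), f2]
    simp [dt]; ring
  · rcases he3 with rfl | rfl <;> simpa using hz0

lemma lattice_any {K : Set (Fin 2 → ℝ)} (hs : K = -K) (hi : (interior K).Nonempty)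
    {x y z : Fin 2 → ℝ} {hx hy hz : ℝ} (Hx : IsSupp K x hx)
    (Hy : IsSupp K y hy) (Hz : IsSupp K z hz) (hne : ¬ (dt x y = 0 ∧ dt x z = 0 ∧ dt y z = 0)) :
    ∃ M : Matrix (Fin 2) (Fin 2) ℝ, IsLatticePacking M K ∧
      |M.det| ≤ (hx + hy + hz) ^ 2 / (|dt x y| + |dt x z| + |dt y z|) := by
  have r2 : dt z y = - dt y z := by simp [dt]; ring
  have r1 : dt y x = - dt x y := by simp [dt]; ring
  have r3 : dt z x = - dt x z := by simp [dt]; ring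
  by_cases hxy : dt x y = 0
  · by_cases hxz : dt x z = 0
    · have hyz : dt y z ≠ 0 := by tauto
      obtain ⟨M, h1, h2⟩ := lattice_one hs hi Hy Hz Hx hyz
      refine ⟨M, h1, h2.trans (le_of_eq ?_)⟩
      rw [r1, r3, abs_neg, abs_neg]; congr 1 <;> ring
    · obtain ⟨M, h1, h2⟩ := lattice_one hs hi Hx Hz Hy hxz
      refine ⟨M, h1, h2.trans (le_of_eq ?_)⟩
      rw [r2, abs_neg]; congr 1 <;> ring
  · exact lattice_one hs hi Hx Hy Hz hxy

/-- The symmetric hull of three points. -/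
def hx3 (A B C : Fin 2 → ℝ) : Set (Fin 2 → ℝ) := convexHull ℝ {A, B, C, -A, -B, -C}

lemma hx3_convex (A B C : Fin 2 → ℝ) : Convex ℝ (hx3 A B C) := convex_convexHull ℝ _

lemma hx3_swap (A B C : Fin 2 → ℝ) : hx3 A B C = hx3 B A C := by
  unfold hx3; congr 1; ext v
  simp only [mem_insert_iff, mem_singleton_iff]; tauto

lemma hx3_rot (A B C : Fin 2 → ℝ) : hx3 A B C = hx3 B C A := by
  unfold hx3; congr 1; ext v
  simp only [mem_insert_iff, mem_singleton_iff]; tauto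

lemma hx3_neg (A B C : Fin 2 → ℝ) : hx3 (-A) B C = hx3 A B C := by
  unfold hx3; congr 1; ext v
  simp only [mem_insert_iff, mem_singleton_iff, neg_neg]; tauto

lemma hx3_sign (A B C : Fin 2 → ℝ) {e : ℝ} (he : e = 1 ∨ e = -1) : hx3 (e • A) B C = hx3 A B C := by
  rcases he with rfl | rfl
  · rw [one_smul]
  · rw [neg_one_smul, hx3_neg]

lemma hx3_memA (A B C : Fin 2 → ℝ) : A ∈ hx3 A B C := subset_convexHull ℝ _ (by simp)
lemma hx3_memB (A B C : Fin 2 → ℝ) : B ∈ hx3 A B C := subset_convexHull ℝ _ (by simp)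
lemma hx3_memC (A B C : Fin 2 → ℝ) : C ∈ hx3 A B C := subset_convexHull ℝ _ (by simp)

lemma hx3_symm (A B C : Fin 2 → ℝ) : ∀ v ∈ hx3 A B C, -v ∈ hx3 A B C := by
  intro v hv
  have : hx3 A B C = -hx3 A B C := by
    unfold hx3
    rw [← convexHull_neg]
    congr 1; ext v
    simp only [mem_insert_iff, mem_singleton_iff, Set.mem_neg, neg_eq_iff_eq_neg, neg_neg]
    tauto
  rw [this]; simpa using hv

lemma hx3_min {A B C : Fin 2 → ℝ} {K : Set (Fin 2 → ℝ)} (hc : Convex ℝ K)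
    (hs : ∀ v ∈ K, -v ∈ K) (hA : A ∈ K) (hB : B ∈ K) (hC : C ∈ K) : hx3 A B C ⊆ K := by
  refine convexHull_min ?_ hc
  intro v hv
  simp only [mem_insert_iff, mem_singleton_iff] at hv
  rcases hv with rfl | rfl | rfl | rfl | rfl | rfl
  exacts [hA, hB, hC, hs _ hA, hs _ hB, hs _ hC]

lemma conv_comb {K : Set (Fin 2 → ℝ)} (hc : Convex ℝ K) (hs : ∀ v ∈ K, -v ∈ K)
    {P Q R : Fin 2 → ℝ} (hP : P ∈ K) (hQ : Q ∈ K) (hR : R ∈ K) {u v w : ℝ}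
    (h : |u| + |v| + |w| ≤ 1) : u • P + v • Q + w • R ∈ K := by
  obtain ⟨e1, he1, f1⟩ := sign_ex u
  obtain ⟨e2, he2, f2⟩ := sign_ex v
  obtain ⟨e3, he3, f3⟩ := sign_ex w
  have hsg : ∀ {e : ℝ} {S : Fin 2 → ℝ}, (e = 1 ∨ e = -1) → S ∈ K → e • S ∈ K := by
    rintro e S (rfl | rfl) hS
    · simpa using hS
    · simpa using hs _ hS
  have h0 : (0 : ℝ) • P ∈ K := symm_mem hc hs hP (by norm_num) (by norm_num)
  have key := hc.sum_mem (t := Finset.univ) (w := ![|u|, |v|, |w|, 1 - (|u| + |v| + |w|)])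
    (z := ![e1 • P, e2 • Q, e3 • R, (0 : ℝ) • P])
    (by
      intro i _
      fin_cases i
      · simp
      · simp
      · simp
      · simpa using h)
    (by simp [Fin.sum_univ_four])
    (by
      intro i _
      fin_cases i
      · exact hsg he1 hP
      · exact hsg he2 hQ
      · exact hsg he3 hR
      · exact h0)
  convert key using 1
  simp [Fin.sum_univ_four, smul_smul, f1, f2, f3]

lemma interp {K : Set (Fin 2 → ℝ)} (hc : Convex ℝ K) {P x : Fin 2 → ℝ} (h1 : P + x ∈ K)
    (h2 : P - x ∈ K) {s : ℝ} (hs : s ∈ Icc (-1 : ℝ) 1) : P + s • x ∈ K := by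
  have := hc h1 h2 (a := (1 + s) / 2) (b := (1 - s) / 2) (by linarith [hs.1]) (by linarith [hs.2])
    (by ring)
  convert this using 1
  ext i; simp; ring

lemma zono_subset {K : Set (Fin 2 → ℝ)} (hc : Convex ℝ K) (hs : ∀ v ∈ K, -v ∈ K)
    {x y z : Fin 2 → ℝ} (h1 : x + y + z ∈ K) (h2 : x + y - z ∈ K) (h3 : x - y + z ∈ K)
    (h4 : x - y - z ∈ K) : sg x + sg y + sg z ⊆ K := by
  rintro _ ⟨_, ⟨_, ⟨s, hs', rfl⟩, _, ⟨t, ht, rfl⟩, rfl⟩, _, ⟨r, hr, rfl⟩, rfl⟩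
  have step : ∀ X : Fin 2 → ℝ, X + y + z ∈ K → X + y - z ∈ K → X - y + z ∈ K → X - y - z ∈ K →
      X + t • y + r • z ∈ K := by
    intro X a b c d
    refine interp hc ?_ ?_ hr
    · have := interp hc (P := X + z) (x := y) (by convert a using 1; abel)
        (by convert c using 1; abel) ht
      convert this using 1; abel
    · have := interp hc (P := X - z) (x := y) (by convert b using 1; abel)
        (by convert d using 1; abel) ht
      convert this using 1; abel
  have e1 := step x h1 h2 h3 h4
  have e2 := step (-x) (by convert hs _ h4 using 1; abel) (by convert hs _ h3 using 1; abel)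
    (by convert hs _ h2 using 1; abel) (by convert hs _ h1 using 1; abel)
  have := interp hc (P := t • y + r • z) (x := x) (by convert e1 using 1; abel)
    (by convert e2 using 1; abel) hs'
  convert this using 1
  simp only []; abel

lemma zono_convex (x y z : Fin 2 → ℝ) : Convex ℝ (sg x + sg y + sg z) :=
  ((sg_convex x).add (sg_convex y)).add (sg_convex z)

lemma zono_symm (x y z : Fin 2 → ℝ) : ∀ v ∈ sg x + sg y + sg z, -v ∈ sg x + sg y + sg z :=
  add_symm (add_symm (fun _ h => sg_symm x h) y) z

lemma zono_mem {x y z v : Fin 2 → ℝ} (s t r : ℝ) (hs : s ∈ Icc (-1 : ℝ) 1)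
    (ht : t ∈ Icc (-1 : ℝ) 1) (hr : r ∈ Icc (-1 : ℝ) 1) (e : s • x + t • y + r • z = v) :
    v ∈ sg x + sg y + sg z := by
  rw [← e]
  exact add_mem_add (add_mem_add ⟨s, hs, rfl⟩ ⟨t, ht, rfl⟩) ⟨r, hr, rfl⟩

/-- If `B` is redundant, the hull is a parallelogram. -/
lemma hx3_para {A B C : Fin 2 → ℝ} {u w : ℝ} (h : |u| + |w| ≤ 1) (hB : B = u • A + w • C) :
    ∃ x y z, hx3 A B C = sg x + sg y + sg z := by
  refine ⟨(1 / 2 : ℝ) • (A + C), (1 / 2 : ℝ) • (A - C), 0, Subset.antisymm ?_ ?_⟩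
  · have hA : A ∈ sg ((1 / 2 : ℝ) • (A + C)) + sg ((1 / 2 : ℝ) • (A - C)) + sg 0 :=
      zono_mem 1 1 0 (by simp) (by simp) (by simp) (by ext i; simp; ring)
    have hC : C ∈ sg ((1 / 2 : ℝ) • (A + C)) + sg ((1 / 2 : ℝ) • (A - C)) + sg 0 :=
      zono_mem 1 (-1) 0 (by simp) (by simp) (by simp) (by ext i; simp; ring)
    refine hx3_min (zono_convex _ _ _) (zono_symm _ _ _) hA ?_ hC
    have := conv_comb (zono_convex _ _ _) (zono_symm _ _ _) hA hC hC (u := u) (v := w) (w := 0)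
      (by simpa using h)
    rw [hB]; convert this using 1; simp
  · have eA : (1 / 2 : ℝ) • (A + C) + (1 / 2 : ℝ) • (A - C) = A := by ext i; simp; ring
    have eC : (1 / 2 : ℝ) • (A + C) - (1 / 2 : ℝ) • (A - C) = C := by ext i; simp; ring
    refine zono_subset (hx3_convex _ _ _) (hx3_symm _ _ _) ?_ ?_ ?_ ?_
    · rw [add_zero, eA]; exact hx3_memA _ _ _
    · rw [sub_zero, eA]; exact hx3_memA _ _ _
    · rw [add_zero, eC]; exact hx3_memC _ _ _
    · rw [sub_zero, eC]; exact hx3_memC _ _ _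

lemma para_aux {A B C : Fin 2 → ℝ} {α β γ : ℝ} (hα : 0 ≤ α) (hγ : 0 ≤ γ)
    (h : α + γ < β) (e f : ℝ) (he : |e| ≤ 1) (hf : |f| ≤ 1) (hrel : β • B = (e * α) • A + (f * γ) • C) :
    ∃ x y z, hx3 A B C = sg x + sg y + sg z := by
  have hβ : 0 < β := by linarith
  refine hx3_para (u := e * α / β) (w := f * γ / β) ?_ ?_
  · rw [abs_div, abs_div, abs_mul, abs_mul, abs_of_nonneg hα, abs_of_nonneg hγ, abs_of_pos hβ,
      ← add_div, div_le_one hβ]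
    nlinarith
  · have : B = β⁻¹ • (β • B) := by rw [smul_smul, inv_mul_cancel₀ hβ.ne', one_smul]
    rw [this, hrel, smul_add, smul_smul, smul_smul]
    congr 2 <;> ring

lemma hx3_zono_signed {A B C : Fin 2 → ℝ} {α β γ : ℝ} (hα : 0 ≤ α) (hβ : 0 ≤ β) (hγ : 0 ≤ γ)
    (hpos : 0 < α + β + γ) (hrel : α • A - β • B + γ • C = 0) :
    ∃ x y z, hx3 A B C = sg x + sg y + sg z := by
  by_cases h1 : α + γ < β
  · exact para_aux hα hγ h1 1 1 (by simp) (by simp)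
      (by rw [one_mul, one_mul, ← sub_eq_zero, ← neg_eq_zero, ← hrel]; abel)
  by_cases h2 : β + γ < α
  · rw [hx3_swap]
    refine para_aux hβ hγ h2 1 (-1) (by simp) (by simp) ?_
    rw [one_mul, neg_one_mul, neg_smul, ← sub_eq_zero, ← hrel]; abel
  by_cases h3 : β + α < γ
  · rw [hx3_rot]
    refine para_aux hβ hα h3 1 (-1) (by simp) (by simp) ?_
    rw [one_mul, neg_one_mul, neg_smul, ← sub_eq_zero, ← hrel]; abel
  push Not at h1 h2 h3
  refine ⟨(1 / 2 : ℝ) • (B - A), (1 / 2 : ℝ) • (C - B), (1 / 2 : ℝ) • (A + C),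
    Subset.antisymm ?_ ?_⟩
  · refine hx3_min (zono_convex _ _ _) (zono_symm _ _ _) ?_ ?_ ?_
    · exact zono_mem (-1) (-1) 1 (by simp) (by simp) (by simp) (by ext i; simp; ring)
    · exact zono_mem 1 (-1) 1 (by simp) (by simp) (by simp) (by ext i; simp; ring)
    · exact zono_mem 1 1 1 (by simp) (by simp) (by simp) (by ext i; simp; ring)
  · have hA := hx3_memA A B C
    have hB := hx3_memB A B C
    have hC := hx3_memC A B C
    have hs := hx3_symm A B C
    refine zono_subset (hx3_convex _ _ _) hs ?_ ?_ ?_ ?_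
    · convert hC using 1; ext i; simp; ring
    · convert hs _ hA using 1; ext i; simp; ring
    · convert hB using 1; ext i; simp; ring
    · set σ := α + β + γ with hσ
      have := conv_comb (hx3_convex A B C) hs hA hB hC (u := -(1 - 2 * α / σ)) (v := 1 - 2 * β / σ)
        (w := -(1 - 2 * γ / σ)) (by
          have q1 : 2 * α / σ ≤ 1 := by rw [div_le_one hpos]; linarith
          have q2 : 2 * β / σ ≤ 1 := by rw [div_le_one hpos]; linarith
          have q3 : 2 * γ / σ ≤ 1 := by rw [div_le_one hpos]; linarith
          rw [abs_neg, abs_neg, abs_of_nonneg (by linarith), abs_of_nonneg (by linarith),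
            abs_of_nonneg (by linarith)]
          have : 2 * α / σ + 2 * β / σ + 2 * γ / σ = 2 := by
            rw [← add_div, ← add_div, div_eq_iff hpos.ne']; rw [hσ]; ring
          linarith)
      convert this using 1
      ext i
      have hi := congrFun hrel i
      simp at hi
      simp
      field_simp
      linear_combination (-4) * hi

lemma hx3_zono (A B C : Fin 2 → ℝ) : ∃ x y z, hx3 A B C = sg x + sg y + sg z := by
  obtain ⟨a, b, c, hne, hrel⟩ : ∃ a b c : ℝ, 0 < |a| + |b| + |c| ∧ a • A - b • B + c • C = 0 := by
    by_cases h : dt A B = 0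
    · by_cases hA : A = 0
      · exact ⟨1, 0, 0, by norm_num, by simp [hA]⟩
      · have h' : A 0 * B 1 - A 1 * B 0 = 0 := h
        by_cases hA0 : A 0 = 0
        · refine ⟨B 1, A 1, 0, ?_, ?_⟩
          · have : A 1 ≠ 0 := by
              intro h1; apply hA; ext i; fin_cases i <;> simp [hA0, h1]
            have := abs_pos.2 this
            positivity
          · ext i; fin_cases i <;> simp <;> linarith
        · refine ⟨B 0, A 0, 0, ?_, ?_⟩
          · have := abs_pos.2 hA0
            positivity
          · ext i; fin_cases i <;> simp <;> linarith
    · refine ⟨dt B C, dt A C, dt A B, ?_, ?_⟩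
      · have := abs_pos.2 h
        positivity
      · ext i; fin_cases i <;> simp [dt] <;> ring
  obtain ⟨e1, he1, f1⟩ := sign_ex a
  obtain ⟨e2, he2, f2⟩ := sign_ex b
  obtain ⟨e3, he3, f3⟩ := sign_ex c
  have := hx3_zono_signed (A := e1 • A) (B := e2 • B) (C := e3 • C) (abs_nonneg a) (abs_nonneg b)
    (abs_nonneg c) hne (by simp only [smul_smul, f1, f2, f3]; exact hrel)
  rw [hx3_sign _ _ _ he1, hx3_rot, hx3_sign _ _ _ he2, hx3_rot, hx3_sign _ _ _ he3, hx3_rot] at this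
  exact this

lemma parallel {x y : Fin 2 → ℝ} (hx : x ≠ 0) (h : dt x y = 0) : ∃ k : ℝ, y = k • x := by
  have hn : x 0 ^ 2 + x 1 ^ 2 ≠ 0 := by
    intro hcon
    apply hx
    have h0 : x 0 = 0 := by nlinarith [sq_nonneg (x 0), sq_nonneg (x 1)]
    have h1 : x 1 = 0 := by nlinarith [sq_nonneg (x 0), sq_nonneg (x 1)]
    ext i; fin_cases i <;> simp [h0, h1]
  have e : x 0 * y 1 - x 1 * y 0 = 0 := h
  refine ⟨(x 0 * y 0 + x 1 * y 1) / (x 0 ^ 2 + x 1 ^ 2), ?_⟩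
  ext i; fin_cases i
  · simp; field_simp; linear_combination (-x 1) * e
  · simp; field_simp; linear_combination (x 0) * e

lemma zono_collinear {x y z : Fin 2 → ℝ} (h1 : dt x y = 0) (h2 : dt x z = 0) (h3 : dt y z = 0) :
    Collinear ℝ (sg x + sg y + sg z) := by
  obtain ⟨v, a, b, c, rfl, rfl, rfl⟩ : ∃ v : Fin 2 → ℝ, ∃ a b c : ℝ,
      x = a • v ∧ y = b • v ∧ z = c • v := by
    by_cases hx : x = 0
    · by_cases hy : y = 0
      · exact ⟨z, 0, 0, 1, by simp [hx], by simp [hy], by simp⟩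
      · obtain ⟨k, hk⟩ := parallel hy h3
        exact ⟨y, 0, 1, k, by simp [hx], by simp, hk⟩
    · obtain ⟨k, hk⟩ := parallel hx h1
      obtain ⟨l, hl⟩ := parallel hx h2
      exact ⟨x, 1, k, l, by simp, hk, hl⟩
  rw [collinear_iff_exists_forall_eq_smul_vadd]
  refine ⟨0, v, ?_⟩
  rintro _ ⟨_, ⟨_, ⟨s, hs', rfl⟩, _, ⟨t, ht, rfl⟩, rfl⟩, _, ⟨r, hr, rfl⟩, rfl⟩
  refine ⟨s * a + t * b + r * c, ?_⟩
  simp only [smul_smul, add_smul, vadd_eq_add, add_zero]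

lemma main_zono (C : Set (Fin 2 → ℝ)) (hCcompact : IsCompact C) (hCconv : Convex ℝ C)
    (hCint : (interior C).Nonempty) (hCsymm : C = -C) (x y z : Fin 2 → ℝ)
    (hcol : ¬ Collinear ℝ (sg x + sg y + sg z)) :
    ∃ M : Matrix (Fin 2) (Fin 2) ℝ, IsLatticePacking M C ∧
      covol M ≤ (mixedArea C (sg x + sg y + sg z)) ^ 2 /
        (volume (sg x + sg y + sg z)).toReal := by
  have hs : ∀ v ∈ C, -v ∈ C := by
    intro v hv; rw [hCsymm]; simpa using hv
  have hne : C.Nonempty := hCint.mono interior_subset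
  obtain ⟨hx, Hx⟩ := exists_supp hCcompact hne hs x
  obtain ⟨hy, Hy⟩ := exists_supp hCcompact hne hs y
  obtain ⟨hz, Hz⟩ := exists_supp hCcompact hne hs z
  have hdet : ¬ (dt x y = 0 ∧ dt x z = 0 ∧ dt y z = 0) := fun h =>
    hcol (zono_collinear h.1 h.2.1 h.2.2)
  obtain ⟨M, hM, hMc⟩ := lattice_any hCsymm hCint Hx Hy Hz hdet
  have v1 := vol_add hCcompact hCconv hs Hx Hy Hz
  have h0 : ∀ a, IsSupp {0} a 0 := fun a => ⟨by simp [dt], 0, by simp, by simp [dt]⟩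
  have v2 := vol_add (K := {0}) isCompact_singleton (convex_singleton 0) (by simp)
    (h0 x) (h0 y) (h0 z)
  rw [singleton_zero, zero_add] at v2
  rw [← singleton_zero] at v2
  simp only [measure_singleton, ENNReal.toReal_zero, zero_add, add_zero, mul_zero] at v2
  refine ⟨M, hM, hMc.trans (le_of_eq ?_)⟩
  unfold mixedArea
  rw [v1, v2]
  set D := |dt x y| + |dt x z| + |dt y z|
  rw [show ((volume C).toReal + 4 * (hx + hy + hz) + 4 * D - (volume C).toReal - 4 * D) / 2 =
    2 * (hx + hy + hz) by ring, mul_pow, show (2 : ℝ) ^ 2 = 4 by norm_num,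
    mul_div_mul_left _ _ (by norm_num)]

/-- For a centrally symmetric planar convex body `C` and a centrally symmetric
convex hexagon or parallelogram `H`, there is a lattice packing of `C` with
covolume at most `(C,H)² / |H|`; equivalently `(C,H) ≥ √(|C||H|/δ_L(C))`. -/
theorem mixedArea_ge_of_symmHexagon (C H : Set (Fin 2 → ℝ))
    (hCcompact : IsCompact C) (hCconv : Convex ℝ C)
    (hCint : (interior C).Nonempty) (hCsymm : C = -C)
    (hH : IsSymmHexagon H ∨ IsParallelogram H) :
    ∃ M : Matrix (Fin 2) (Fin 2) ℝ, IsLatticePacking M C ∧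
      covol M ≤ (mixedArea C H) ^ 2 / (volume H).toReal := by
  obtain ⟨A, B, D, hHe, hcol⟩ : ∃ A B D, H = hx3 A B D ∧ ¬ Collinear ℝ H := by
    rcases hH with ⟨A, hA, hc⟩ | ⟨B, B', hB, hc⟩
    · exact ⟨A 0, A 1, A 2, hA, hc⟩
    · refine ⟨B, B', B, ?_, hc⟩
      rw [hB]; unfold hx3; congr 1; ext v
      simp only [mem_insert_iff, mem_singleton_iff]; tauto
  obtain ⟨x, y, z, hz⟩ := hx3_zono A B D
  rw [hHe, hz] at hcol
  rw [hHe, hz]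
  exact main_zono C hCcompact hCconv hCint hCsymm x y z hcol
end

section
/- Let H' ⊂ ℝ² be a centrally symmetric convex hexagon or a parallelogram. Then there exists a full-rank lattice Λ ⊂ ℝ² with covol(Λ) = |H'| such that the translates {H' + λ : λ ∈ Λ} have pairwise disjoint interiors and cover all of ℝ². (Equivalently, δ_L(H') = 1: every centrally symmetric hexagon or parallelogram tiles the plane by a lattice.) -/
open MeasureTheory Pointwise

/-- The conclusion of the main theorem, as a predicate on the set. -/
def HexTiles (H' : Set (Fin 2 → ℝ)) : Prop :=
    ∃ M : Matrix (Fin 2) (Fin 2) ℝ, M.det ≠ 0 ∧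
      covol M = (volume H').toReal ∧
      (∀ l ∈ latticePoints M, ∀ l' ∈ latticePoints M, l ≠ l' →
        Disjoint (interior (l +ᵥ H')) (interior (l' +ᵥ H'))) ∧
      (⋃ l ∈ latticePoints M, l +ᵥ H') = Set.univ

/-- Cast of an integer vector. -/
def zc (z : Fin 2 → ℤ) : Fin 2 → ℝ := fun i => (z i : ℝ)

/-- A convex set tiling by the integer lattice has area one. -/
lemma volume_one (K : Set (Fin 2 → ℝ)) (hK : Convex ℝ K)
    (hpack : ∀ z z' : Fin 2 → ℤ, z ≠ z' →
      Disjoint (interior (zc z +ᵥ K)) (interior (zc z' +ᵥ K)))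
    (hcov : ∀ p : Fin 2 → ℝ, ∃ z : Fin 2 → ℤ, p - zc z ∈ K) :
    volume K = 1 := by
  have hfd := ZSpan.isAddFundamentalDomain' (Pi.basisFun ℝ (Fin 2)) volume
  have hmem : ∀ g : (Submodule.span ℤ (Set.range (Pi.basisFun ℝ (Fin 2)))).toAddSubgroup,
      ∃ z : Fin 2 → ℤ, (g : Fin 2 → ℝ) = zc z := by
    intro g
    have := ((Pi.basisFun ℝ (Fin 2)).mem_span_iff_repr_mem ℤ (g : Fin 2 → ℝ)).mp g.2
    choose z hz using this
    refine ⟨z, ?_⟩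
    ext i
    have := hz i
    simp at this
    simp [zc, this]
  have hmem' : ∀ z : Fin 2 → ℤ,
      zc z ∈ (Submodule.span ℤ (Set.range (Pi.basisFun ℝ (Fin 2)))).toAddSubgroup := by
    intro z
    refine ((Pi.basisFun ℝ (Fin 2)).mem_span_iff_repr_mem ℤ (zc z)).mpr ?_
    intro i
    exact ⟨z i, by simp [zc]⟩
  have hK' : IsAddFundamentalDomain
      (Submodule.span ℤ (Set.range (Pi.basisFun ℝ (Fin 2)))).toAddSubgroup K volume := by
    refine ⟨hK.nullMeasurableSet _, ?_, ?_⟩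
    · refine Filter.Eventually.of_forall fun p => ?_
      obtain ⟨z, hz⟩ := hcov p
      refine ⟨-⟨zc z, hmem' z⟩, ?_⟩
      have : (-(⟨zc z, hmem' z⟩ :
        (Submodule.span ℤ (Set.range (Pi.basisFun ℝ (Fin 2)))).toAddSubgroup)) +ᵥ p
          = p - zc z := by
        change -zc z + p = _
        abel
      rw [this]
      exact hz
    · intro g g' hgg
      obtain ⟨z, hz⟩ := hmem g
      obtain ⟨z', hz'⟩ := hmem g'
      have hne : z ≠ z' := by
        rintro rfl
        exact hgg (Subtype.ext (hz.trans hz'.symm))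
      change volume ((g +ᵥ K) ∩ (g' +ᵥ K)) = 0
      have e1 : g +ᵥ K = zc z +ᵥ K := by rw [← hz]; rfl
      have e2 : g' +ᵥ K = zc z' +ᵥ K := by rw [← hz']; rfl
      rw [e1, e2]
      have h1 : volume (frontier (zc z +ᵥ K)) = 0 := (hK.vadd _).addHaar_frontier _
      have h2 : volume (frontier (zc z' +ᵥ K)) = 0 := (hK.vadd _).addHaar_frontier _
      refine measure_mono_null ?_ (measure_union_null h1 h2)
      rintro p ⟨hp1, hp2⟩
      by_cases i1 : p ∈ interior (zc z +ᵥ K)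
      · by_cases i2 : p ∈ interior (zc z' +ᵥ K)
        · exact absurd rfl ((hpack z z' hne).ne_of_mem i1 i2)
        · exact Or.inr ⟨subset_closure hp2, i2⟩
      · exact Or.inl ⟨subset_closure hp1, i1⟩
  have : Countable (Submodule.span ℤ (Set.range (Pi.basisFun ℝ (Fin 2)))).toAddSubgroup :=
    inferInstanceAs (Countable (Submodule.span ℤ (Set.range (Pi.basisFun ℝ (Fin 2)))))
  rw [hK'.measure_eq hfd, ZSpan.fundamentalDomain_pi_basisFun, volume_pi, Measure.pi_pi]
  simp

/-- Transport of an integer tiling by an invertible matrix. -/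
lemma tiles_of_standard (K : Set (Fin 2 → ℝ)) (hK : Convex ℝ K)
    (hpack : ∀ z z' : Fin 2 → ℤ, z ≠ z' →
      Disjoint (interior (zc z +ᵥ K)) (interior (zc z' +ᵥ K)))
    (hcov : ∀ p : Fin 2 → ℝ, ∃ z : Fin 2 → ℤ, p - zc z ∈ K)
    (M : Matrix (Fin 2) (Fin 2) ℝ) (hM : M.det ≠ 0) :
    HexTiles (M.mulVec '' K) := by
  have hinj : Function.Injective M.mulVec :=
    Matrix.mulVec_injective_iff_isUnit.mpr ((Matrix.isUnit_iff_isUnit_det M).mpr hM.isUnit)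
  have hsurj : Function.Surjective M.mulVec :=
    Matrix.mulVec_surjective_iff_isUnit.mpr ((Matrix.isUnit_iff_isUnit_det M).mpr hM.isUnit)
  have hcont : Continuous M.mulVec := (Matrix.toLin' M).continuous_of_finiteDimensional
  have hopen : IsOpenMap M.mulVec :=
    (Matrix.toLin' M).isOpenMap_of_finiteDimensional hsurj
  have hhom : IsHomeomorph M.mulVec := ⟨hcont, hopen, hinj, hsurj⟩
  have htr : ∀ z, M.mulVec (zc z) +ᵥ (M.mulVec '' K) = M.mulVec '' (zc z +ᵥ K) := by
    intro z
    ext p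
    simp only [Set.mem_vadd_set, Set.mem_image, vadd_eq_add]
    constructor
    · rintro ⟨_, ⟨q, hq, rfl⟩, rfl⟩
      exact ⟨_, ⟨q, hq, rfl⟩, Matrix.mulVec_add _ _ _⟩
    · rintro ⟨_, ⟨q, hq, rfl⟩, rfl⟩
      exact ⟨_, ⟨q, hq, rfl⟩, (Matrix.mulVec_add _ _ _).symm⟩
  refine ⟨M, hM, ?_, ?_, ?_⟩
  · have := Measure.addHaar_image_linearMap (volume : Measure (Fin 2 → ℝ)) (Matrix.toLin' M) K
    rw [volume_one K hK hpack hcov, mul_one, LinearMap.det_toLin'] at this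
    change volume (M.mulVec '' K) = _ at this
    rw [this, ENNReal.toReal_ofReal (abs_nonneg _)]
    rfl
  · rintro _ ⟨z, rfl⟩ _ ⟨z', rfl⟩ hne
    have hzz : z ≠ z' := by rintro rfl; exact hne rfl
    change Disjoint (interior (M.mulVec (zc z) +ᵥ _)) (interior (M.mulVec (zc z') +ᵥ _))
    rw [htr, htr, ← hhom.image_interior, ← hhom.image_interior]
    exact (Set.disjoint_image_iff hinj).mpr (hpack z z' hzz)
  · rw [Set.eq_univ_iff_forall]
    intro p
    obtain ⟨q, rfl⟩ := hsurj p
    obtain ⟨z, hz⟩ := hcov q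
    refine Set.mem_iUnion₂.mpr ⟨M.mulVec (zc z), ⟨z, rfl⟩, ?_⟩
    rw [htr]
    exact ⟨q, Set.mem_vadd_set.mpr ⟨_, hz, by simp⟩, rfl⟩

lemma strict_of_interior (S : Set (Fin 2 → ℝ)) (α β c : ℝ) (hne : α ≠ 0 ∨ β ≠ 0)
    (hS : ∀ q ∈ S, |α * q 0 + β * q 1| ≤ c) (q : Fin 2 → ℝ) (hq : q ∈ interior S) :
    |α * q 0 + β * q 1| < c := by
  let f : (Fin 2 → ℝ) →ₗ[ℝ] ℝ := α • LinearMap.proj 0 + β • LinearMap.proj 1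
  have hf : ∀ q, f q = α * q 0 + β * q 1 := fun q => by simp [f]
  have hsurj : Function.Surjective f := by
    apply LinearMap.surjective
    intro h0
    rcases hne with h | h
    · have := congrArg (fun g => g (Pi.single 0 1)) h0
      simp [hf] at this
      exact h this
    · have := congrArg (fun g => g (Pi.single 1 1)) h0
      simp [hf] at this
      exact h this
  have hopen := f.isOpenMap_of_finiteDimensional hsurj
  have h1 : f q ∈ interior (Set.Icc (-c) c) := by
    refine interior_mono ?_ (hopen.image_interior_subset S ⟨q, hq, rfl⟩)
    rintro _ ⟨r, hr, rfl⟩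
    rw [hf]
    exact abs_le.mp (hS r hr)
  rw [interior_Icc, hf] at h1
  exact abs_lt.mpr h1

/-- The hexagon in lattice coordinates. -/
def stdHex (x y : ℝ) : Set (Fin 2 → ℝ) :=
  {q | |2 * y * q 0 + (1 + y - x) * q 1| ≤ y ∧ |(1 + x - y) * q 0 + 2 * x * q 1| ≤ x ∧
    |-(1 + x - y) * q 0 + (1 + y - x) * q 1| ≤ 1}

lemma convex_abs (α β c : ℝ) : Convex ℝ {q : Fin 2 → ℝ | |α * q 0 + β * q 1| ≤ c} := by
  intro p hp q hq a b ha hb hab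
  simp only [Set.mem_ofPred_eq, abs_le, Pi.add_apply, Pi.smul_apply, smul_eq_mul] at *
  have hb' : b = 1 - a := by linarith
  subst hb'
  constructor <;> nlinarith [mul_le_mul_of_nonneg_left hp.1 ha, mul_le_mul_of_nonneg_left hp.2 ha,
    mul_le_mul_of_nonneg_left hq.1 hb, mul_le_mul_of_nonneg_left hq.2 hb]

lemma stdHex_convex (x y : ℝ) : Convex ℝ (stdHex x y) :=
  (convex_abs _ _ _).inter ((convex_abs _ _ _).inter (convex_abs _ _ _))

lemma stdHex_neg (x y : ℝ) (q : Fin 2 → ℝ) (hq : q ∈ stdHex x y) : -q ∈ stdHex x y := by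
  obtain ⟨h1, h2, h3⟩ := hq
  refine ⟨?_, ?_, ?_⟩
  · rw [← abs_neg] at h1; convert h1 using 2; simp; ring
  · rw [← abs_neg] at h2; convert h2 using 2; simp; ring
  · rw [← abs_neg] at h3; convert h3 using 2; simp; ring

lemma stdHex_pack (x y : ℝ) (hx : 0 < x) (hx1 : x ≤ 1) (hy : 0 < y) (hy1 : y ≤ 1)
    (hxy : 1 ≤ x + y) (z z' : Fin 2 → ℤ) (hne : z ≠ z') :
    Disjoint (interior (zc z +ᵥ stdHex x y)) (interior (zc z' +ᵥ stdHex x y)) := by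
  rw [Set.disjoint_left]
  intro p hp hp'
  rw [interior_vadd, Set.mem_vadd_set] at hp hp'
  obtain ⟨q, hq, hqp⟩ := hp
  obtain ⟨r, hr, hrp⟩ := hp'
  have e : ∀ i, q i - r i = ((z' i - z i : ℤ) : ℝ) := by
    intro i
    have := congrFun (hqp.trans hrp.symm) i
    simp [zc] at this
    push_cast
    linarith
  have q1 := abs_lt.mp (strict_of_interior _ _ _ _ (Or.inl (by positivity)) (fun s hs => hs.1) q hq)
  have q2 := abs_lt.mp (strict_of_interior _ _ _ _ (Or.inr (by positivity)) (fun s hs => hs.2.1) q hq)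
  have hor : -(1 + x - y) ≠ 0 ∨ (1 + y - x) ≠ 0 := by
    by_contra! h
    linarith [h.1, h.2]
  have q3 := abs_lt.mp (strict_of_interior _ _ _ _ hor (fun s hs => hs.2.2) q hq)
  have r1 := abs_lt.mp (strict_of_interior _ _ _ _ (Or.inl (by positivity)) (fun s hs => hs.1) r hr)
  have r2 := abs_lt.mp (strict_of_interior _ _ _ _ (Or.inr (by positivity)) (fun s hs => hs.2.1) r hr)
  have r3 := abs_lt.mp (strict_of_interior _ _ _ _ hor (fun s hs => hs.2.2) r hr)
  have hmn : z' 0 - z 0 ≠ 0 ∨ z' 1 - z 1 ≠ 0 := by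
    by_contra! h
    apply hne
    ext i
    fin_cases i
    · simp; omega
    · simp; omega
  have e0 := e 0
  have e1 := e 1
  have q0' : q 0 = r 0 + ((z' 0 - z 0 : ℤ) : ℝ) := by linarith
  have q1' : q 1 = r 1 + ((z' 1 - z 1 : ℤ) : ℝ) := by linarith
  rw [q0', q1'] at q1 q2 q3
  generalize z' 0 - z 0 = m at *
  generalize z' 1 - z 1 = n at *
  have a0 : 0 ≤ 1 + y - x := by linarith
  have b0 : 0 ≤ 1 + x - y := by linarith
  -- pure inequalities
  have g1 : |2 * y * m + (1 + y - x) * n| < 2 * y := by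
    rw [abs_lt]; constructor <;> nlinarith
  have g2 : |(1 + x - y) * m + 2 * x * n| < 2 * x := by
    rw [abs_lt]; constructor <;> nlinarith
  have g3 : |-(1 + x - y) * m + (1 + y - x) * n| < 2 := by
    rw [abs_lt]; constructor <;> nlinarith
  rw [abs_lt] at g1 g2 g3
  clear q1 q2 q3 r1 r2 r3 e0 e1 q0' q1' e
  rcases lt_trichotomy m 0 with hm | hm | hm
  · have hm' : (m : ℝ) ≤ -1 := by exact_mod_cast (by omega : m ≤ -1)
    rcases le_or_gt n 0 with hn | hn
    · have hn' : (n : ℝ) ≤ 0 := by exact_mod_cast hn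
      nlinarith
    · have hn' : (1 : ℝ) ≤ n := by exact_mod_cast hn
      nlinarith
  · subst hm
    rcases lt_trichotomy n 0 with hn | hn | hn
    · have hn' : (n : ℝ) ≤ -1 := by exact_mod_cast (by omega : n ≤ -1)
      push_cast at *
      nlinarith
    · omega
    · have hn' : (1 : ℝ) ≤ n := by exact_mod_cast hn
      push_cast at *
      nlinarith
  · have hm' : (1 : ℝ) ≤ m := by exact_mod_cast hm
    rcases lt_or_ge n 0 with hn | hn
    · have hn' : (n : ℝ) ≤ -1 := by exact_mod_cast (by omega : n ≤ -1)
      nlinarith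
    · have hn' : (0 : ℝ) ≤ n := by exact_mod_cast hn
      nlinarith

lemma stdHex_tri_aux (s t : ℝ) (hs : 0 ≤ s) (ht : 0 ≤ t) (hst : s + t ≤ 1) (x y : ℝ)
    (hx : 0 < x) (hx1 : x ≤ 1) (hy : 0 < y) (hy1 : y ≤ 1) (hxy : 1 ≤ x + y)
    (h1 : y ≤ 2 * y * s + (1 + y - x) * t)
    (h3 : (1 + x - y) * (1 - s) + (1 + y - x) * t ≤ 1) :
    |2 * y * (s - 1) + (1 + y - x) * t| ≤ y ∧ |(1 + x - y) * (s - 1) + 2 * x * t| ≤ x ∧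
        |-(1 + x - y) * (s - 1) + (1 + y - x) * t| ≤ 1 := by
  have a0 : 0 ≤ 1 + y - x := by linarith
  have b0 : 0 ≤ 1 + x - y := by linarith
  have k5 := mul_nonneg b0 (by linarith : 0 ≤ 1 - s - t)
  have t2 : t ≤ 1 / 2 := by linarith
  have hΔ : 0 ≤ (x + y - 1) * t := mul_nonneg (by linarith) ht
  have k7 : 0 ≤ (x + y - 1) * (1 / 2 - t) := mul_nonneg (by linarith) (by linarith)
  have k1 : 1 - s ≤ 1 / 2 + t := by
    by_contra! hc
    have := mul_pos hy (by linarith : 0 < 1 - s - 1 / 2 - t)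
    linarith
  have k2 := mul_le_mul_of_nonneg_left k1 b0
  have k3 := mul_nonneg b0 (by linarith : 0 ≤ 1 - s)
  have k4 := mul_nonneg a0 ht
  have k6 := mul_nonneg hy.le (by linarith : 0 ≤ 1 - s - t)
  refine ⟨abs_le.mpr ⟨by linarith, by linarith⟩, abs_le.mpr ⟨by linarith, by linarith⟩,
    abs_le.mpr ⟨by linarith, by linarith⟩⟩

/-- The triangle `0, u, v` is covered by three hexagons. -/
lemma stdHex_cov_tri (x y : ℝ) (hx : 0 < x) (hx1 : x ≤ 1) (hy : 0 < y) (hy1 : y ≤ 1)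
    (hxy : 1 ≤ x + y) (s t : ℝ) (hs : 0 ≤ s) (ht : 0 ≤ t) (hst : s + t ≤ 1) :
    ∃ z : Fin 2 → ℤ, ![s, t] - zc z ∈ stdHex x y := by
  have a0 : 0 ≤ 1 + y - x := by linarith
  have b0 : 0 ≤ 1 + x - y := by linarith
  have has : 0 ≤ (1 + y - x) * s := mul_nonneg a0 hs
  have hat : 0 ≤ (1 + y - x) * t := mul_nonneg a0 ht
  have hbs : 0 ≤ (1 + x - y) * s := mul_nonneg b0 hs
  have hbt : 0 ≤ (1 + x - y) * t := mul_nonneg b0 ht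
  have hys : 0 ≤ y * s := by positivity
  have hyt : 0 ≤ y * t := by positivity
  have hxs : 0 ≤ x * s := by positivity
  have hxt : 0 ≤ x * t := by positivity
  by_cases h0 : 2 * y * s + (1 + y - x) * t ≤ y ∧ (1 + x - y) * s + 2 * x * t ≤ x
  · obtain ⟨h1, h2⟩ := h0
    have s2 : s ≤ 1 / 2 := by
      by_contra! hc
      nlinarith
    have t2 : t ≤ 1 / 2 := by
      by_contra! hc
      nlinarith
    refine ⟨0, ?_⟩
    have : ![s, t] - zc 0 = ![s, t] := by ext i; simp [zc]
    rw [this]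
    refine ⟨?_, ?_, ?_⟩
    all_goals
      simp only [Matrix.cons_val_zero, Matrix.cons_val_one]
      refine abs_le.mpr ⟨by nlinarith, by nlinarith⟩
  · have key : (y ≤ 2 * y * s + (1 + y - x) * t ∧ (1 + x - y) * (1 - s) + (1 + y - x) * t ≤ 1) ∨
        (x ≤ (1 + x - y) * s + 2 * x * t ∧ (1 + x - y) * s + (1 + y - x) * (1 - t) ≤ 1) := by
      have hrel : (x + y - 1) * (-(1 + x - y) * s + (1 + y - x) * t - (y - x)) =
        (1 + y - x) * ((1 + x - y) * s + 2 * x * t - x)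
          - (1 + x - y) * (2 * y * s + (1 + y - x) * t - y) := by ring
      have hΔ : 0 ≤ x + y - 1 := by linarith
      generalize hF1 : 2 * y * s + (1 + y - x) * t = F1 at *
      generalize hF2 : (1 + x - y) * s + 2 * x * t = F2 at *
      rcases le_total (-(1 + x - y) * s + (1 + y - x) * t - (y - x)) 0 with h | h
      · by_cases g : y ≤ F1
        · left; exact ⟨g, by linarith⟩
        · exfalso
          have g2 : x < F2 := by
            by_contra! g2
            exact h0 ⟨by linarith, g2⟩
          have := mul_nonneg hΔ (neg_nonneg.mpr h)
          nlinarith [mul_nonneg a0 (by linarith : 0 ≤ F2 - x), mul_nonneg b0 (by linarith : 0 ≤ y - F1)]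
      · by_cases g : x ≤ F2
        · right; exact ⟨g, by linarith⟩
        · exfalso
          have g2 : y < F1 := by
            by_contra! g2
            exact h0 ⟨g2, by linarith⟩
          have := mul_nonneg hΔ h
          nlinarith [mul_nonneg a0 (by linarith : 0 ≤ x - F2), mul_nonneg b0 (by linarith : 0 ≤ F1 - y)]
    rcases key with ⟨k1, k2⟩ | ⟨k1, k2⟩
    · refine ⟨![1, 0], ?_⟩
      have : ![s, t] - zc ![1, 0] = ![s - 1, t] := by ext i; fin_cases i <;> simp [zc]
      rw [this]
      exact stdHex_tri_aux s t hs ht hst x y hx hx1 hy hy1 hxy k1 k2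
    · refine ⟨![0, 1], ?_⟩
      have : ![s, t] - zc ![0, 1] = ![s, t - 1] := by ext i; fin_cases i <;> simp [zc]
      rw [this]
      obtain ⟨h1, h2, h3⟩ := stdHex_tri_aux t s ht hs (by linarith) y x hy hy1 hx hx1 (by linarith)
        (by linarith) (by linarith)
      rw [← abs_neg] at h3
      refine ⟨?_, ?_, ?_⟩
      · convert h2 using 2; simp; ring
      · convert h1 using 2; simp; ring
      · convert h3 using 2; simp; ring

lemma stdHex_cov (x y : ℝ) (hx : 0 < x) (hx1 : x ≤ 1) (hy : 0 < y) (hy1 : y ≤ 1)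
    (hxy : 1 ≤ x + y) (p : Fin 2 → ℝ) :
    ∃ z : Fin 2 → ℤ, p - zc z ∈ stdHex x y := by
  have f0 := Int.fract_nonneg (p 0)
  have f1 := Int.fract_nonneg (p 1)
  have g0 := (Int.fract_lt_one (p 0)).le
  have g1 := (Int.fract_lt_one (p 1)).le
  rcases le_total (Int.fract (p 0) + Int.fract (p 1)) 1 with h | h
  · obtain ⟨z, hz⟩ := stdHex_cov_tri x y hx hx1 hy hy1 hxy _ _ f0 f1 h
    refine ⟨fun i => z i + ⌊p i⌋, ?_⟩
    convert hz using 1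
    ext i
    fin_cases i <;> simp only [zc, Pi.sub_apply, Pi.neg_apply, Int.fract, Fin.zero_eta, Fin.mk_one, Matrix.cons_val_zero, Matrix.cons_val_one] <;> push_cast <;> ring
  · obtain ⟨z, hz⟩ := stdHex_cov_tri x y hx hx1 hy hy1 hxy (1 - Int.fract (p 0))
      (1 - Int.fract (p 1)) (by linarith) (by linarith) (by linarith)
    refine ⟨fun i => 1 - z i + ⌊p i⌋, ?_⟩
    convert stdHex_neg _ _ _ hz using 1
    ext i
    fin_cases i <;> simp only [zc, Pi.sub_apply, Pi.neg_apply, Int.fract, Fin.zero_eta, Fin.mk_one, Matrix.cons_val_zero, Matrix.cons_val_one] <;> push_cast <;> ring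

/-- `H` is the smallest symmetric convex set containing `P`, `Q`, `R`. -/
def SymHull (H : Set (Fin 2 → ℝ)) (P Q R : Fin 2 → ℝ) : Prop :=
  Convex ℝ H ∧ (∀ p ∈ H, -p ∈ H) ∧ P ∈ H ∧ Q ∈ H ∧ R ∈ H ∧
    ∀ T : Set (Fin 2 → ℝ), Convex ℝ T → (∀ p ∈ T, -p ∈ T) → P ∈ T → Q ∈ T → R ∈ T → H ⊆ T

lemma comb_mem {T : Set (Fin 2 → ℝ)} (hT : Convex ℝ T) (hs : ∀ p ∈ T, -p ∈ T)
    {P Q : Fin 2 → ℝ} (hP : P ∈ T) (hQ : Q ∈ T) {a b : ℝ} (ha : 0 ≤ a) (hb : 0 ≤ b)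
    (hab : a + b ≤ 1) : a • P + b • Q ∈ T := by
  have h0 : (0 : Fin 2 → ℝ) ∈ T := by
    have := hT hP (hs P hP) (by norm_num : (0 : ℝ) ≤ 1 / 2) (by norm_num : (0 : ℝ) ≤ 1 / 2)
      (by norm_num)
    simpa using this
  rcases eq_or_lt_of_le (add_nonneg ha hb) with h | h
  · have h1 : a = 0 := by linarith
    have h2 : b = 0 := by linarith
    subst h1 h2
    simpa using h0
  · have h1 := hT hP hQ (div_nonneg ha h.le) (div_nonneg hb h.le) (by field_simp)
    have h2 := hT h0 h1 (by linarith : 0 ≤ 1 - (a + b)) h.le (by ring)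
    convert h2 using 1
    rw [smul_zero, zero_add, smul_add, smul_smul, smul_smul, mul_div_cancel₀ _ h.ne',
      mul_div_cancel₀ _ h.ne']

lemma tiles_core (H : Set (Fin 2 → ℝ)) (P Q : Fin 2 → ℝ) (x y : ℝ)
    (hx : 0 < x) (hx1 : x ≤ 1) (hy : 0 < y) (hy1 : y ≤ 1) (hxy : 1 ≤ x + y)
    (hdet : P 0 * Q 1 - P 1 * Q 0 ≠ 0) (hH : SymHull H P Q (x • P + y • Q)) : HexTiles H := by
  obtain ⟨hc, hsym, hP, hQ, hR, hmin⟩ := hH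
  let M : Matrix (Fin 2) (Fin 2) ℝ :=
    !![(1 + x) * P 0 + y * Q 0, x * P 0 + (1 + y) * Q 0;
       (1 + x) * P 1 + y * Q 1, x * P 1 + (1 + y) * Q 1]
  have hD : 0 < 1 + x + y := by linarith
  have hM : M.det ≠ 0 := by
    have : M.det = (1 + x + y) * (P 0 * Q 1 - P 1 * Q 0) := by
      simp [M, Matrix.det_fin_two]; ring
    rw [this]
    exact mul_ne_zero hD.ne' hdet
  have hMq : ∀ q : Fin 2 → ℝ, M.mulVec q =
      ((1 + x) * q 0 + x * q 1) • P + (y * q 0 + (1 + y) * q 1) • Q := by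
    intro q
    ext i
    fin_cases i <;> simp [M, Matrix.mulVec, dotProduct, Fin.sum_univ_two] <;> ring
  have hmem : ∀ X Y : ℝ, |y * X + (1 - x) * Y| ≤ y → |(1 - y) * X + x * Y| ≤ x → |Y - X| ≤ 1 →
      X • P + Y • Q ∈ M.mulVec '' stdHex x y := by
    intro X Y h1 h2 h3
    refine ⟨![((1 + y) * X - x * Y) / (1 + x + y), ((1 + x) * Y - y * X) / (1 + x + y)], ?_, ?_⟩
    · refine ⟨?_, ?_, ?_⟩
      · convert h1 using 2
        simp
        field_simp
        ring
      · convert h2 using 2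
        simp
        field_simp
        ring
      · convert h3 using 2
        simp
        field_simp
        ring
    · rw [hMq]
      simp only [Matrix.cons_val_zero, Matrix.cons_val_one]
      congr 2
      · field_simp
        ring
      · field_simp
        ring
  have hpos : ∀ X Y : ℝ, y * X + (1 - x) * Y ≤ y → (1 - y) * X + x * Y ≤ x → Y - X ≤ 1 →
      0 ≤ Y → X • P + Y • Q ∈ H := by
    intro X Y h1 h2 h3 hY
    rcases le_total X 0 with hX | hX
    · have := comb_mem hc hsym (hsym P hP) hQ (a := -X) (b := Y) (by linarith) hY (by linarith)
      simpa using this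
    · rcases le_total (x * Y) (y * X) with h | h
      · have := comb_mem hc hsym hP hR (a := X - x * Y / y) (b := Y / y)
          (by rw [sub_nonneg, div_le_iff₀ hy]; linarith) (by positivity)
          (by
            have : X - x * Y / y + Y / y = (y * X + (1 - x) * Y) / y := by field_simp; ring
            rw [this, div_le_one hy]; exact h1)
        convert this using 1
        ext i
        simp
        field_simp
        ring
      · have := comb_mem hc hsym hQ hR (a := Y - y * X / x) (b := X / x)
          (by rw [sub_nonneg, div_le_iff₀ hx]; linarith) (by positivity)
          (by
            have : Y - y * X / x + X / x = ((1 - y) * X + x * Y) / x := by field_simp; ring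
            rw [this, div_le_one hx]; exact h2)
        convert this using 1
        ext i
        simp
        field_simp
        ring
  have hEq : H = M.mulVec '' stdHex x y := by
    apply Set.Subset.antisymm
    · apply hmin
      · exact (stdHex_convex x y).linear_image (Matrix.toLin' M)
      · rintro _ ⟨q, hq, rfl⟩
        exact ⟨-q, stdHex_neg _ _ _ hq, Matrix.mulVec_neg _ _⟩
      · have := hmem 1 0 (abs_le.mpr ⟨by linarith, by linarith⟩)
          (abs_le.mpr ⟨by linarith, by linarith⟩) (abs_le.mpr ⟨by linarith, by linarith⟩)
        simpa using this
      · have := hmem 0 1 (abs_le.mpr ⟨by linarith, by linarith⟩)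
          (abs_le.mpr ⟨by linarith, by linarith⟩) (abs_le.mpr ⟨by linarith, by linarith⟩)
        simpa using this
      · exact hmem x y (abs_le.mpr ⟨by nlinarith, by nlinarith⟩)
          (abs_le.mpr ⟨by nlinarith, by nlinarith⟩) (abs_le.mpr ⟨by linarith, by linarith⟩)
    · rintro _ ⟨q, ⟨h1, h2, h3⟩, rfl⟩
      rw [hMq]
      rw [abs_le] at h1 h2 h3
      rcases le_total 0 (y * q 0 + (1 + y) * q 1) with h | h
      · exact hpos _ _ (by linarith) (by linarith) (by linarith) h
      · have := hsym _ (hpos (-((1 + x) * q 0 + x * q 1)) (-(y * q 0 + (1 + y) * q 1))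
          (by linarith) (by linarith) (by linarith) (by linarith))
        convert this using 1
        module
  rw [hEq]
  exact tiles_of_standard _ (stdHex_convex x y) (stdHex_pack x y hx hx1 hy hy1 hxy)
    (stdHex_cov x y hx hx1 hy hy1 hxy) M hM

lemma tiles_nonneg (H : Set (Fin 2 → ℝ)) (P Q : Fin 2 → ℝ) (x y : ℝ)
    (hx : 0 ≤ x) (hx1 : x ≤ 1) (hy : 0 ≤ y) (hy1 : y ≤ 1)
    (hdet : P 0 * Q 1 - P 1 * Q 0 ≠ 0) (hH : SymHull H P Q (x • P + y • Q)) : HexTiles H := by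
  rcases le_or_gt (x + y) 1 with h | h
  · refine tiles_core H P Q (1 / 2) (1 / 2) (by norm_num) (by norm_num) (by norm_num) (by norm_num)
      (by norm_num) hdet ?_
    obtain ⟨hc, hsym, hP, hQ, hR, hmin⟩ := hH
    refine ⟨hc, hsym, hP, hQ,
      comb_mem hc hsym hP hQ (by norm_num) (by norm_num) (by norm_num), ?_⟩
    intro T hT hs hPT hQT _
    exact hmin T hT hs hPT hQT (comb_mem hT hs hPT hQT hx hy h)
  · exact tiles_core H P Q x y (by linarith) hx1 (by linarith) hy1 h.le hdet hH

lemma SymHull.neg_left {H : Set (Fin 2 → ℝ)} {P Q R : Fin 2 → ℝ} (h : SymHull H P Q R) :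
    SymHull H (-P) Q R := by
  obtain ⟨hc, hsym, hP, hQ, hR, hmin⟩ := h
  refine ⟨hc, hsym, hsym _ hP, hQ, hR, fun T hT hs h1 h2 h3 => hmin T hT hs ?_ h2 h3⟩
  simpa using hs _ h1

lemma SymHull.swap12 {H : Set (Fin 2 → ℝ)} {P Q R : Fin 2 → ℝ} (h : SymHull H P Q R) :
    SymHull H Q P R := by
  obtain ⟨hc, hsym, hP, hQ, hR, hmin⟩ := h
  exact ⟨hc, hsym, hQ, hP, hR, fun T hT hs h1 h2 h3 => hmin T hT hs h2 h1 h3⟩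

lemma SymHull.swap23 {H : Set (Fin 2 → ℝ)} {P Q R : Fin 2 → ℝ} (h : SymHull H P Q R) :
    SymHull H P R Q := by
  obtain ⟨hc, hsym, hP, hQ, hR, hmin⟩ := h
  exact ⟨hc, hsym, hP, hR, hQ, fun T hT hs h1 h2 h3 => hmin T hT hs h1 h3 h2⟩

lemma tiles_signed (H : Set (Fin 2 → ℝ)) (P Q : Fin 2 → ℝ) (x y : ℝ)
    (hx : |x| ≤ 1) (hy : |y| ≤ 1)
    (hdet : P 0 * Q 1 - P 1 * Q 0 ≠ 0) (hH : SymHull H P Q (x • P + y • Q)) : HexTiles H := by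
  have step : ∀ (P : Fin 2 → ℝ) (x : ℝ), 0 ≤ x → x ≤ 1 → P 0 * Q 1 - P 1 * Q 0 ≠ 0 →
      SymHull H P Q (x • P + y • Q) → HexTiles H := by
    intro P x hx hx1 hdet hH
    rcases le_total 0 y with h | h
    · exact tiles_nonneg H P Q x y hx hx1 h (abs_le.mp hy).2 hdet hH
    · refine tiles_nonneg H P (-Q) x (-y) hx hx1 (by linarith) (by linarith [(abs_le.mp hy).1]) ?_ ?_
      · simp only [Pi.neg_apply]
        contrapose! hdet
        linarith
      · have := hH.swap12.neg_left.swap12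
        simpa using this
  rcases le_total 0 x with h | h
  · exact step P x h (abs_le.mp hx).2 hdet hH
  · refine step (-P) (-x) (by linarith) (by linarith [(abs_le.mp hx).1]) ?_ ?_
    · simp only [Pi.neg_apply]
      contrapose! hdet
      linarith
    · simpa using hH.neg_left

lemma tiles_max (H : Set (Fin 2 → ℝ)) (P Q R : Fin 2 → ℝ)
    (hdet : P 0 * Q 1 - P 1 * Q 0 ≠ 0)
    (h1 : |R 0 * Q 1 - R 1 * Q 0| ≤ |P 0 * Q 1 - P 1 * Q 0|)
    (h2 : |P 0 * R 1 - P 1 * R 0| ≤ |P 0 * Q 1 - P 1 * Q 0|)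
    (hH : SymHull H P Q R) : HexTiles H := by
  have hR : R = ((R 0 * Q 1 - R 1 * Q 0) / (P 0 * Q 1 - P 1 * Q 0)) • P +
      ((P 0 * R 1 - P 1 * R 0) / (P 0 * Q 1 - P 1 * Q 0)) • Q := by
    ext i
    fin_cases i
    · simp only [Fin.zero_eta, Pi.add_apply, Pi.smul_apply, smul_eq_mul]
      rw [div_mul_eq_mul_div, div_mul_eq_mul_div, ← add_div, eq_div_iff hdet]
      ring
    · simp only [Fin.mk_one, Pi.add_apply, Pi.smul_apply, smul_eq_mul]
      rw [div_mul_eq_mul_div, div_mul_eq_mul_div, ← add_div, eq_div_iff hdet]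
      ring
  rw [hR] at hH
  refine tiles_signed H P Q _ _ ?_ ?_ hdet hH
  · rw [abs_div]; exact div_le_one_of_le₀ h1 (abs_nonneg _)
  · rw [abs_div]; exact div_le_one_of_le₀ h2 (abs_nonneg _)

lemma collinear_of_det {H : Set (Fin 2 → ℝ)} {P Q R : Fin 2 → ℝ} (hH : SymHull H P Q R)
    (V : Fin 2 → ℝ) (hV : V ≠ 0) (hP : V 0 * P 1 - V 1 * P 0 = 0)
    (hQ : V 0 * Q 1 - V 1 * Q 0 = 0) (hR : V 0 * R 1 - V 1 * R 0 = 0) : Collinear ℝ H := by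
  have key : ∀ W : Fin 2 → ℝ, V 0 * W 1 - V 1 * W 0 = 0 → W ∈ Submodule.span ℝ {V} := by
    intro W hW
    rw [Submodule.mem_span_singleton]
    by_cases h0 : V 0 = 0
    · have h1 : V 1 ≠ 0 := by
        intro h1
        apply hV
        ext i
        fin_cases i <;> simp [h0, h1]
      refine ⟨W 1 / V 1, ?_⟩
      have : W 0 = 0 := by
        have : V 1 * W 0 = 0 := by rw [h0] at hW; linarith
        exact (mul_eq_zero.mp this).resolve_left h1
      ext i
      fin_cases i
      · simp [h0, this]
      · simp [h1]
    · refine ⟨W 0 / V 0, ?_⟩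
      ext i
      fin_cases i
      · simp [h0]
      · simp
        field_simp
        linarith
  have hsub := hH.2.2.2.2.2 (Submodule.span ℝ {V} : Submodule ℝ (Fin 2 → ℝ))
    (Submodule.convex _) (fun p hp => neg_mem hp) (key P hP) (key Q hQ) (key R hR)
  rw [collinear_iff_exists_forall_eq_smul_vadd]
  refine ⟨0, V, fun p hp => ?_⟩
  obtain ⟨r, hr⟩ := Submodule.mem_span_singleton.mp (hsub hp)
  exact ⟨r, by simp [hr]⟩

lemma tiles_of_symHull (H : Set (Fin 2 → ℝ)) (P Q R : Fin 2 → ℝ)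
    (hH : SymHull H P Q R) (hcol : ¬ Collinear ℝ H) : HexTiles H := by
  have hne : P 0 * Q 1 - P 1 * Q 0 ≠ 0 ∨ P 0 * R 1 - P 1 * R 0 ≠ 0 ∨
      Q 0 * R 1 - Q 1 * R 0 ≠ 0 := by
    by_contra! h
    obtain ⟨h1, h2, h3⟩ := h
    apply hcol
    by_cases hP : P = 0
    · by_cases hQ : Q = 0
      · by_cases hR : R = 0
        · subst hP hQ hR
          exact collinear_of_det hH (fun _ => 1)
            (fun h => one_ne_zero (congrFun h 0)) (by simp) (by simp) (by simp)
        · exact collinear_of_det hH R hR (by linarith) (by linarith) (by ring)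
      · exact collinear_of_det hH Q hQ (by linarith) (by ring) h3
    · exact collinear_of_det hH P hP (by ring) h1 h2
  have n1 : |R 0 * Q 1 - R 1 * Q 0| = |Q 0 * R 1 - Q 1 * R 0| := by
    rw [← abs_neg]; congr 1; ring
  have n2 : |Q 0 * P 1 - Q 1 * P 0| = |P 0 * Q 1 - P 1 * Q 0| := by
    rw [← abs_neg]; congr 1; ring
  have pos : ∀ a b : ℝ, |b| ≤ |a| → b ≠ 0 → a ≠ 0 := by
    intro a b hab hb ha
    rw [ha, abs_zero] at hab
    exact hb (abs_nonpos_iff.mp hab)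
  have case1 : |P 0 * R 1 - P 1 * R 0| ≤ |P 0 * Q 1 - P 1 * Q 0| →
      |Q 0 * R 1 - Q 1 * R 0| ≤ |P 0 * Q 1 - P 1 * Q 0| → HexTiles H := by
    intro a b
    refine tiles_max H P Q R ?_ (n1 ▸ b) a hH
    rcases hne with h | h | h
    exacts [h, pos _ _ a h, pos _ _ b h]
  have case2 : |P 0 * Q 1 - P 1 * Q 0| ≤ |P 0 * R 1 - P 1 * R 0| →
      |Q 0 * R 1 - Q 1 * R 0| ≤ |P 0 * R 1 - P 1 * R 0| → HexTiles H := by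
    intro a b
    refine tiles_max H P R Q ?_ b a hH.swap23
    rcases hne with h | h | h
    exacts [pos _ _ a h, h, pos _ _ b h]
  have case3 : |P 0 * Q 1 - P 1 * Q 0| ≤ |Q 0 * R 1 - Q 1 * R 0| →
      |P 0 * R 1 - P 1 * R 0| ≤ |Q 0 * R 1 - Q 1 * R 0| → HexTiles H := by
    intro a b
    refine tiles_max H Q R P ?_ b (n2 ▸ a) hH.swap12.swap23
    rcases hne with h | h | h
    exacts [pos _ _ a h, pos _ _ b h, h]
  rcases le_total |P 0 * Q 1 - P 1 * Q 0| |P 0 * R 1 - P 1 * R 0| with a | a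
  · rcases le_total |P 0 * R 1 - P 1 * R 0| |Q 0 * R 1 - Q 1 * R 0| with b | b
    · exact case3 (a.trans b) b
    · exact case2 a b
  · rcases le_total |P 0 * Q 1 - P 1 * Q 0| |Q 0 * R 1 - Q 1 * R 0| with b | b
    · exact case3 b (a.trans b)
    · exact case1 a b

lemma symHull_hex (P Q R : Fin 2 → ℝ) :
    SymHull (convexHull ℝ {P, Q, R, -P, -Q, -R}) P Q R := by
  have hsub := subset_convexHull ℝ ({P, Q, R, -P, -Q, -R} : Set (Fin 2 → ℝ))
  refine ⟨convex_convexHull _ _, ?_, hsub (by simp), hsub (by simp), hsub (by simp), ?_⟩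
  · intro p hp
    have hle : convexHull ℝ ({P, Q, R, -P, -Q, -R} : Set (Fin 2 → ℝ)) ⊆
        -convexHull ℝ ({P, Q, R, -P, -Q, -R} : Set (Fin 2 → ℝ)) := by
      refine convexHull_min ?_ (convex_convexHull _ _).neg
      rintro q (rfl | rfl | rfl | rfl | rfl | rfl) <;> exact hsub (by simp)
    exact hle hp
  · intro T hT hs h1 h2 h3
    refine convexHull_min ?_ hT
    rintro q (rfl | rfl | rfl | rfl | rfl | rfl)
    exacts [h1, h2, h3, hs _ h1, hs _ h2, hs _ h3]

/-- Every centrally symmetric convex hexagon or parallelogram `H'` tiles the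
plane by a lattice: there is a full-rank lattice of covolume `|H'|` whose
translates of `H'` have pairwise disjoint interiors and cover `ℝ²`;
equivalently `δ_L(H') = 1`. -/
theorem symmHexagon_tiles_plane (H' : Set (Fin 2 → ℝ))
    (hH : IsSymmHexagon H' ∨ IsParallelogram H') :
    ∃ M : Matrix (Fin 2) (Fin 2) ℝ, M.det ≠ 0 ∧
      covol M = (volume H').toReal ∧
      (∀ l ∈ latticePoints M, ∀ l' ∈ latticePoints M, l ≠ l' →
        Disjoint (interior (l +ᵥ H')) (interior (l' +ᵥ H'))) ∧
      (⋃ l ∈ latticePoints M, l +ᵥ H') = Set.univ := by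
  change HexTiles H'
  rcases hH with ⟨A, rfl, hcol⟩ | ⟨B, B', rfl, hcol⟩
  · exact tiles_of_symHull _ _ _ _ (symHull_hex (A 0) (A 1) (A 2)) hcol
  · have : ({B, B', -B, -B'} : Set (Fin 2 → ℝ)) = {B, B', B', -B, -B', -B'} := by
      ext p; simp
    rw [this] at hcol ⊢
    exact tiles_of_symHull _ _ _ _ (symHull_hex B B' B') hcol
end

section
/- Let H' ⊂ ℝ² be a centrally symmetric convex hexagon or a parallelogram and let C ⊆ H' be a centrally symmetric convex body. Then there exists a full-rank lattice Λ ⊂ ℝ² with covol(Λ) ≤ |H'| such that the translates {C + λ : λ ∈ Λ} have pairwise disjoint interiors. (Equivalently, δ_L(C) ≥ |C| / |H'|.) -/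
open MeasureTheory Pointwise

/-- The planar determinant. -/
def dd (u v : Fin 2 → ℝ) : ℝ := u 0 * v 1 - u 1 * v 0

/-- Half-open standard triangle. -/
def stdTri : Set (Fin 2 → ℝ) := {p | 0 < p 0 ∧ 0 < p 1 ∧ p 0 + p 1 ≤ 1}

/-- Triangle with vertices `0, u, v` (partially open). -/
def tri (u v : Fin 2 → ℝ) : Set (Fin 2 → ℝ) :=
  Matrix.toLin' (!![u 0, v 0; u 1, v 1]) '' stdTri

lemma convex_stdTri : Convex ℝ stdTri := by
  intro p hp q hq a b ha hb hab
  obtain ⟨h1, h2, h3⟩ := hp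
  obtain ⟨k1, k2, k3⟩ := hq
  have key : ∀ s t : ℝ, 0 < s → 0 < t → 0 < a * s + b * t := by
    intro s t hs ht
    rcases ha.eq_or_lt with h | h
    · have : b = 1 := by linarith
      subst this; rw [← h]; linarith
    · have := mul_pos h hs
      have := mul_nonneg hb ht.le
      linarith
  refine ⟨?_, ?_, ?_⟩
  · simpa using key _ _ h1 k1
  · simpa using key _ _ h2 k2
  · simp only [Pi.add_apply, Pi.smul_apply, smul_eq_mul]
    nlinarith

lemma convex_tri (u v : Fin 2 → ℝ) : Convex ℝ (tri u v) :=
  convex_stdTri.linear_image _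

lemma mem_tri {u v w : Fin 2 → ℝ} (h : w ∈ tri u v) :
    ∃ s t : ℝ, 0 < s ∧ 0 < t ∧ s + t ≤ 1 ∧ w = s • u + t • v := by
  obtain ⟨p, ⟨h1, h2, h3⟩, rfl⟩ := h
  refine ⟨p 0, p 1, h1, h2, h3, ?_⟩
  ext i
  fin_cases i <;> simp [Matrix.toLin'_apply, Matrix.mulVec, dotProduct, Fin.sum_univ_two] <;> ring

lemma volume_stdTri : (1 : ENNReal) ≤ 2 * volume stdTri := by
  have hsub : (Set.univ.pi fun _ : Fin 2 => Set.Ioo (0 : ℝ) 1) ⊆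
      stdTri ∪ (fun p => (fun _ => (1 : ℝ)) - p) ⁻¹' stdTri := by
    intro p hp
    have h0 := hp 0 (Set.mem_univ _)
    have h1 := hp 1 (Set.mem_univ _)
    simp only [Set.mem_Ioo] at h0 h1
    by_cases h : p 0 + p 1 ≤ 1
    · exact Or.inl ⟨h0.1, h1.1, h⟩
    · right
      refine ⟨?_, ?_, ?_⟩ <;> simp only [Pi.sub_apply] <;> linarith
  have hn : NullMeasurableSet stdTri (volume : Measure (Fin 2 → ℝ)) :=
    convex_stdTri.nullMeasurableSet volume
  have hv : volume ((fun p : Fin 2 → ℝ => (fun _ => (1 : ℝ)) - p) ⁻¹' stdTri) = volume stdTri :=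
    (Measure.measurePreserving_sub_left volume (fun _ : Fin 2 => (1 : ℝ))).measure_preimage hn
  have := (measure_mono hsub).trans (measure_union_le (μ := volume) _ _)
  rw [hv, Real.volume_pi_Ioo] at this
  simpa [two_mul] using this

lemma volume_tri (u v : Fin 2 → ℝ) : ENNReal.ofReal (|dd u v| / 2) ≤ volume (tri u v) := by
  unfold tri
  rw [Measure.addHaar_image_linearMap]
  have hdet : LinearMap.det (Matrix.toLin' (!![u 0, v 0; u 1, v 1])) = dd u v := by
    rw [LinearMap.det_toLin', Matrix.det_fin_two_of]; unfold dd; ring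
  rw [hdet, ENNReal.ofReal_div_of_pos two_pos]
  apply ENNReal.div_le_of_le_mul
  calc ENNReal.ofReal |dd u v| = ENNReal.ofReal |dd u v| * 1 := by rw [mul_one]
    _ ≤ ENNReal.ofReal |dd u v| * (2 * volume stdTri) := by gcongr; exact volume_stdTri
    _ = _ := by simp; ring

lemma vol_union {S T : Set (Fin 2 → ℝ)} {a b : ℝ} (ha : ENNReal.ofReal a ≤ volume S) (h0 : 0 ≤ a)
    (h1 : 0 ≤ b)
    (hb : ENNReal.ofReal b ≤ volume T) (hT : Convex ℝ T) (hd : ∀ w ∈ S, w ∉ T) :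
    ENNReal.ofReal (a + b) ≤ volume (S ∪ T) := by
  rw [measure_union₀ (hT.nullMeasurableSet volume) (Set.disjoint_left.2 hd).aedisjoint,
    ENNReal.ofReal_add h0 h1]
  exact add_le_add ha hb

/-- Working hypotheses on the hexagon. -/
structure Hyp (H : Set (Fin 2 → ℝ)) (A B C : Fin 2 → ℝ) : Prop where
  conv : Convex ℝ H
  fin : volume H ≠ ⊤
  a : A ∈ H
  b : B ∈ H
  c : C ∈ H
  a' : -A ∈ H
  b' : -B ∈ H
  c' : -C ∈ H
  bound : ∀ (u : Fin 2 → ℝ) (r : ℝ), |dd A u| ≤ r → |dd B u| ≤ r → |dd C u| ≤ r →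
    ∀ w ∈ H, |dd w u| ≤ r

lemma tri_subset {H : Set (Fin 2 → ℝ)} (hc : Convex ℝ H) (h0 : (0 : Fin 2 → ℝ) ∈ H)
    {u v : Fin 2 → ℝ} (hu : u ∈ H) (hv : v ∈ H) : tri u v ⊆ H := by
  intro w hw
  obtain ⟨s, t, hs, ht, hst, rfl⟩ := mem_tri hw
  have hpos : 0 < s + t := by linarith
  have h1 : (s / (s + t)) • u + (t / (s + t)) • v ∈ H :=
    hc hu hv (by positivity) (by positivity) (by field_simp)
  have h2 := hc.smul_mem_of_zero_mem h0 h1 ⟨hpos.le, hst⟩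
  convert h2 using 1
  rw [smul_add, smul_smul, smul_smul]
  congr 2 <;> field_simp

lemma vol_hex {H : Set (Fin 2 → ℝ)} {A B C : Fin 2 → ℝ} (hc : Convex ℝ H)
    (ha : A ∈ H) (hb : B ∈ H) (hC : C ∈ H) (ha' : -A ∈ H) (hb' : -B ∈ H) (hC' : -C ∈ H)
    (hx : 0 ≤ dd A B) (hy : 0 ≤ dd B C) (hz : 0 < dd A C) (hxy : dd A C ≤ dd A B + dd B C) :
    ENNReal.ofReal (dd A B + dd B C + dd A C) ≤ volume H := by
  have h0 : (0 : Fin 2 → ℝ) ∈ H := by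
    have := hc ha ha' (a := 1/2) (b := 1/2) (by norm_num) (by norm_num) (by norm_num)
    simpa using this
  have hsub : tri A B ∪ tri B C ∪ tri C (-A) ∪ tri (-A) (-B) ∪ tri (-B) (-C) ∪ tri (-C) A ⊆ H := by
    simp only [Set.union_subset_iff]
    refine ⟨⟨⟨⟨⟨?_, ?_⟩, ?_⟩, ?_⟩, ?_⟩, ?_⟩ <;> apply tri_subset hc h0 <;> assumption
  refine le_trans ?_ (measure_mono hsub)
  -- descriptions of the sectors through the functionals `dd · C`, `dd A ·`, `dd B ·`
  have m1 : ∀ w ∈ tri A B, 0 < dd w C ∧ 0 ≤ dd A w ∧ ∃ s > 0, dd B w = - (s * dd A B) := by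
    intro w hw
    obtain ⟨s, t, hs, ht, -, rfl⟩ := mem_tri hw
    have e1 : dd (s • A + t • B) C = s * dd A C + t * dd B C := by simp [dd]; ring
    have e2 : dd A (s • A + t • B) = t * dd A B := by simp [dd]; ring
    refine ⟨by rw [e1]; positivity, by rw [e2]; positivity, s, hs, by simp [dd]; ring⟩
  have m2 : ∀ w ∈ tri B C, 0 ≤ dd w C ∧ 0 < dd A w ∧ ∃ s > 0, dd B w = s * dd B C := by
    intro w hw
    obtain ⟨s, t, hs, ht, -, rfl⟩ := mem_tri hw
    have e1 : dd (s • B + t • C) C = s * dd B C := by simp [dd]; ring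
    have e2 : dd A (s • B + t • C) = s * dd A B + t * dd A C := by simp [dd]; ring
    refine ⟨by rw [e1]; positivity, by rw [e2]; positivity, t, ht, by simp [dd]; ring⟩
  have m3 : ∀ w ∈ tri C (-A), dd w C < 0 ∧ 0 < dd A w := by
    intro w hw
    obtain ⟨s, t, hs, ht, -, rfl⟩ := mem_tri hw
    have e1 : dd (s • C + t • (-A)) C = - (t * dd A C) := by simp [dd]; ring
    have e2 : dd A (s • C + t • (-A)) = s * dd A C := by simp [dd]; ring
    have := mul_pos ht hz
    refine ⟨by rw [e1]; linarith, by rw [e2]; positivity⟩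
  have m4 : ∀ w ∈ tri (-A) (-B), dd w C < 0 ∧ dd A w ≤ 0 ∧ ∃ s > 0, dd B w = s * dd A B := by
    intro w hw
    obtain ⟨s, t, hs, ht, -, rfl⟩ := mem_tri hw
    have e1 : dd (s • (-A) + t • (-B)) C = -(s * dd A C + t * dd B C) := by simp [dd]; ring
    have e2 : dd A (s • (-A) + t • (-B)) = -(t * dd A B) := by simp [dd]; ring
    have p1 : 0 < s * dd A C + t * dd B C := by positivity
    have p2 : 0 ≤ t * dd A B := by positivity
    refine ⟨by rw [e1]; linarith, by rw [e2]; linarith, s, hs, by simp [dd]; ring⟩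
  have m5 : ∀ w ∈ tri (-B) (-C), dd w C ≤ 0 ∧ dd A w < 0 ∧ ∃ s > 0, dd B w = -(s * dd B C) := by
    intro w hw
    obtain ⟨s, t, hs, ht, -, rfl⟩ := mem_tri hw
    have e1 : dd (s • (-B) + t • (-C)) C = -(s * dd B C) := by simp [dd]; ring
    have e2 : dd A (s • (-B) + t • (-C)) = -(s * dd A B + t * dd A C) := by simp [dd]; ring
    have p1 : 0 < s * dd A B + t * dd A C := by positivity
    have p2 : 0 ≤ s * dd B C := by positivity
    refine ⟨by rw [e1]; linarith, by rw [e2]; linarith, t, ht, by simp [dd]; ring⟩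
  have m6 : ∀ w ∈ tri (-C) A, 0 < dd w C ∧ dd A w < 0 := by
    intro w hw
    obtain ⟨s, t, hs, ht, -, rfl⟩ := mem_tri hw
    have e1 : dd (s • (-C) + t • A) C = t * dd A C := by simp [dd]; ring
    have e2 : dd A (s • (-C) + t • A) = - (s * dd A C) := by simp [dd]; ring
    have := mul_pos hs hz
    refine ⟨by rw [e1]; positivity, by rw [e2]; linarith⟩
  have key : ∀ s > 0, ∀ t > 0, s * dd A B + t * dd B C ≠ 0 := by
    intro s hs t ht h
    have p1 : 0 ≤ s * dd A B := by positivity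
    have p2 : 0 ≤ t * dd B C := by positivity
    have q1 : s * dd A B = 0 := by linarith
    have q2 : t * dd B C = 0 := by linarith
    have r1 := (mul_eq_zero.1 q1).resolve_left hs.ne'
    have r2 := (mul_eq_zero.1 q2).resolve_left ht.ne'
    linarith
  have v1 := volume_tri A B
  have v2 := volume_tri B C
  have v3 := volume_tri C (-A)
  have v4 := volume_tri (-A) (-B)
  have v5 := volume_tri (-B) (-C)
  have v6 := volume_tri (-C) A
  have f3 : dd C (-A) = dd A C := by simp [dd]; ring
  have f4 : dd (-A) (-B) = dd A B := by simp [dd]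
  have f5 : dd (-B) (-C) = dd B C := by simp [dd]
  have f6 : dd (-C) A = dd A C := by simp [dd]; ring
  rw [f3] at v3
  rw [f4] at v4
  rw [f5] at v5
  rw [f6] at v6
  rw [abs_of_nonneg hx] at v1 v4
  rw [abs_of_nonneg hy] at v2 v5
  rw [abs_of_pos hz] at v3 v6
  have d2 : ∀ w ∈ tri A B, w ∉ tri B C := by
    intro w h1 h2
    obtain ⟨-, -, s, hs, e⟩ := m1 w h1
    obtain ⟨-, -, t, ht, e'⟩ := m2 w h2
    exact key s hs t ht (by linarith)
  have d5 : ∀ w ∈ tri (-A) (-B), w ∉ tri (-B) (-C) := by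
    intro w h1 h2
    obtain ⟨-, -, s, hs, e⟩ := m4 w h1
    obtain ⟨-, -, t, ht, e'⟩ := m5 w h2
    exact key s hs t ht (by linarith)
  have u2 := vol_union v1 (by positivity) (by positivity) v2 (convex_tri _ _) d2
  have u3 := vol_union u2 (by positivity) (by positivity) v3 (convex_tri _ _) (by
    rintro w (h | h) h'
    · have := m1 w h; have := m3 w h'; linarith
    · have := m2 w h; have := m3 w h'; linarith)
  have u4 := vol_union u3 (by positivity) (by positivity) v4 (convex_tri _ _) (by
    rintro w ((h | h) | h) h'
    · have := m1 w h; have := m4 w h'; linarith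
    · have := m2 w h; have := m4 w h'; linarith
    · have := m3 w h; have := m4 w h'; linarith)
  have u5 := vol_union u4 (by positivity) (by positivity) v5 (convex_tri _ _) (by
    rintro w (((h | h) | h) | h) h'
    · have := m1 w h; have := m5 w h'; linarith
    · have := m2 w h; have := m5 w h'; linarith
    · have := m3 w h; have := m5 w h'; linarith
    · exact d5 w h h')
  have u6 := vol_union u5 (by positivity) (by positivity) v6 (convex_tri _ _) (by
    rintro w ((((h | h) | h) | h) | h) h'
    · have := m1 w h; have := m6 w h'; linarith
    · have := m2 w h; have := m6 w h'; linarith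
    · have := m3 w h; have := m6 w h'; linarith
    · have := m4 w h; have := m6 w h'; linarith
    · have := m5 w h; have := m6 w h'; linarith)
  convert u6 using 1
  congr 1
  ring

lemma arith_pos (x y z : ℝ) (m n : ℤ) (hx : 0 ≤ x) (hy : 0 ≤ y) (hz : 0 < z)
    (h1 : x ≤ y + z) (h2 : y ≤ x + z) (h3 : z ≤ x + y)
    (gx : 2 * x ≤ |m * (2 * x) + n * (x + z - y)| → x ≤ 0)
    (gy : 2 * y ≤ |m * (y + z - x) + n * (2 * y)| → y ≤ 0)
    (gz : 2 * z ≤ |m * (x - y - z) + n * (x - y + z)| → z ≤ 0)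
    (hmn : 1 ≤ m ∨ (m = 0 ∧ 1 ≤ n)) : False := by
  rcases hmn with hm | ⟨hm, hn⟩
  · have hm' : (1 : ℝ) ≤ m := by exact_mod_cast hm
    rcases le_or_gt 0 n with hn | hn
    · have hn' : (0 : ℝ) ≤ n := by exact_mod_cast hn
      have hx0 : x ≤ 0 := gx (le_trans (by
        nlinarith [mul_nonneg hn' (by linarith : 0 ≤ x + z - y),
          mul_nonneg (sub_nonneg.2 hm') hx]) (le_abs_self _))
      have hx1 : x = 0 := le_antisymm hx0 hx
      subst hx1
      have hyz : y = z := by linarith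
      subst hyz
      have := gy (le_trans (by
        nlinarith [mul_nonneg hn' hy, mul_nonneg (sub_nonneg.2 hm') hy]) (le_abs_self _))
      linarith
    · rcases lt_or_ge (-n) m with hk | hk
      · have hk' : (1 : ℝ) ≤ m + n := by
          have : 1 ≤ m + n := by omega
          exact_mod_cast this
        have hn' : (0 : ℝ) ≤ -n := by
          have : 0 ≤ -n := by omega
          exact_mod_cast this
        have hx0 : x ≤ 0 := gx (le_trans (by
          nlinarith [mul_nonneg hn' (by linarith : 0 ≤ x - z + y),
            mul_nonneg (sub_nonneg.2 hk') hx]) (le_abs_self _))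
        have hx1 : x = 0 := le_antisymm hx0 hx
        subst hx1
        have hyz : y = z := by linarith
        subst hyz
        have := gy (le_trans (by
          nlinarith [mul_nonneg (sub_nonneg.2 hk') hy]) (le_abs_self _))
        linarith
      · have hk' : (0 : ℝ) ≤ -n - m := by
          have : 0 ≤ -n - m := by omega
          exact_mod_cast this
        have := gz (le_trans (by
          nlinarith [mul_nonneg hk' (by linarith : 0 ≤ x - y + z),
            mul_nonneg (sub_nonneg.2 hm') hz.le]) (neg_le_abs _))
        linarith
  · have hn' : (1 : ℝ) ≤ n := by exact_mod_cast hn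
    subst hm
    have hy0 : y ≤ 0 := gy (le_trans (by
      push_cast; nlinarith [mul_nonneg (sub_nonneg.2 hn') hy]) (le_abs_self _))
    have hy1 : y = 0 := le_antisymm hy0 hy
    subst hy1
    have hxz : x = z := by linarith
    subst hxz
    have := gx (le_trans (by
      push_cast; nlinarith [mul_nonneg (sub_nonneg.2 hn') hx]) (le_abs_self _))
    linarith

lemma arith (x y z e : ℝ) (m n : ℤ) (hx : 0 ≤ x) (hy : 0 ≤ y) (hz : 0 < z)
    (h1 : x ≤ y + z) (h2 : y ≤ x + z) (h3 : z ≤ x + y) (he : 0 < e)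
    (b1 : (1 + e) * |m * (2 * x) + n * (x + z - y)| ≤ 2 * x)
    (b2 : (1 + e) * |m * (y + z - x) + n * (2 * y)| ≤ 2 * y)
    (b3 : (1 + e) * |m * (x - y - z) + n * (x - y + z)| ≤ 2 * z) : m = 0 ∧ n = 0 := by
  have gen : ∀ r q : ℝ, (1 + e) * |q| ≤ 2 * r → 2 * r ≤ |q| → r ≤ 0 := by
    intro r q hq hr
    by_contra hh
    push Not at hh
    nlinarith
  have gx := gen x _ b1
  have gy := gen y _ b2
  have gz := gen z _ b3
  by_contra hne
  by_cases hpos : 1 ≤ m ∨ (m = 0 ∧ 1 ≤ n)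
  · exact arith_pos x y z m n hx hy hz h1 h2 h3 gx gy gz hpos
  · refine arith_pos x y z (-m) (-n) hx hy hz h1 h2 h3 ?_ ?_ ?_ (by omega)
    all_goals
      push_cast
      rw [neg_mul, neg_mul, ← neg_add, abs_neg]
      assumption

lemma core {H : Set (Fin 2 → ℝ)} {A B C : Fin 2 → ℝ} (K : Set (Fin 2 → ℝ)) (hc : Convex ℝ H)
    (hfin : volume H ≠ ⊤)
    (ha : A ∈ H) (hb : B ∈ H) (hC : C ∈ H) (ha' : -A ∈ H) (hb' : -B ∈ H) (hC' : -C ∈ H)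
    (hx : 0 ≤ dd A B) (hy : 0 ≤ dd B C) (hz : 0 < dd A C) (h1 : dd A B ≤ dd B C + dd A C)
    (h2 : dd B C ≤ dd A B + dd A C) (h3 : dd A C ≤ dd A B + dd B C)
    (b1 : ∀ w ∈ H, |dd w (B - A)| ≤ dd A B) (b2 : ∀ w ∈ H, |dd w (C - B)| ≤ dd B C)
    (b3 : ∀ w ∈ H, |dd w (-A - C)| ≤ dd A C)
    (hKc : Convex ℝ K) (hKs : K = -K) (hKH : K ⊆ H) :
    ∃ M : Matrix (Fin 2) (Fin 2) ℝ, IsLatticePacking M K ∧ covol M ≤ (volume H).toReal := by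
  have hdet : (!![A 0 + B 0, B 0 + C 0; A 1 + B 1, B 1 + C 1] : Matrix (Fin 2) (Fin 2) ℝ).det
      = dd A B + dd B C + dd A C := by
    rw [Matrix.det_fin_two_of]; unfold dd; ring
  refine ⟨!![A 0 + B 0, B 0 + C 0; A 1 + B 1, B 1 + C 1], ⟨?_, ?_⟩, ?_⟩
  · rw [hdet]; positivity
  · rintro l ⟨z, hl⟩ l' ⟨z', hl'⟩ hne
    rw [Set.disjoint_left]
    intro p hp hp'
    rw [interior_vadd] at hp hp'
    rw [Set.mem_vadd_set_iff_neg_vadd_mem, vadd_eq_add] at hp hp'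
    have hs : -(-l' + p) ∈ interior K := by
      have : interior K = - interior K := by
        conv_lhs => rw [hKs]
        exact ((Homeomorph.neg (Fin 2 → ℝ)).preimage_interior K).symm
      rw [this]; simpa using hp'
    have hmid := hKc.interior hp hs (a := 1/2) (b := 1/2) (by norm_num) (by norm_num) (by norm_num)
    set d : Fin 2 → ℝ := (1/2 : ℝ) • (-l + p) + (1/2 : ℝ) • -(-l' + p) with hd
    have hcont : Filter.Tendsto (fun e : ℝ => (1 + e) • d) (nhdsWithin 0 (Set.Ioi 0)) (nhds d) := by
      have : Continuous (fun e : ℝ => (1 + e) • d) := by fun_prop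
      have := this.tendsto 0
      simp only [add_zero, one_smul] at this
      exact this.mono_left nhdsWithin_le_nhds
    obtain ⟨e, hek, he⟩ := ((hcont.eventually (mem_interior_iff_mem_nhds.1 hmid)).and
      self_mem_nhdsWithin).exists
    have heH := hKH hek
    have he : 0 < e := he
    have hd' : d = (1/2 : ℝ) • (((z' 0 - z 0 : ℤ) : ℝ) • (A + B) + ((z' 1 - z 1 : ℤ) : ℝ) • (B + C)) := by
      rw [hd, hl, hl']
      ext i
      fin_cases i <;> simp [Matrix.mulVec, dotProduct, Fin.sum_univ_two] <;> ring
    have cv : ∀ (u : Fin 2 → ℝ) (r : ℝ), |dd ((1 + e) • d) u| ≤ r →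
        (1 + e) * |((z' 0 - z 0 : ℤ) : ℝ) * dd (A + B) u + ((z' 1 - z 1 : ℤ) : ℝ) * dd (B + C) u|
          ≤ 2 * r := by
      intro u r hr
      have : dd ((1 + e) • d) u = (1 + e) * (((z' 0 - z 0 : ℤ) : ℝ) * dd (A + B) u
          + ((z' 1 - z 1 : ℤ) : ℝ) * dd (B + C) u) / 2 := by
        rw [hd']; simp [dd]; ring
      rw [this, abs_div, abs_mul, abs_of_pos (by linarith : 0 < 1 + e), abs_two] at hr
      linarith
    have c1 := cv _ _ (b1 _ heH)
    have c2 := cv _ _ (b2 _ heH)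
    have c3 := cv _ _ (b3 _ heH)
    have := arith (dd A B) (dd B C) (dd A C) e (z' 0 - z 0) (z' 1 - z 1) hx hy hz h1 h2 h3 he
      (by convert c1 using 4 <;> simp only [dd, Pi.add_apply, Pi.sub_apply, Pi.neg_apply] <;> ring) (by convert c2 using 4 <;> simp only [dd, Pi.add_apply, Pi.sub_apply, Pi.neg_apply] <;> ring)
      (by convert c3 using 4 <;> simp only [dd, Pi.add_apply, Pi.sub_apply, Pi.neg_apply] <;> ring)
    apply hne
    have hzz : z = z' := by
      ext i; fin_cases i <;> simp <;> omega
    rw [hl, hl', hzz]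
  · unfold covol
    rw [hdet, abs_of_pos (by positivity)]
    exact (ENNReal.ofReal_le_iff_le_toReal hfin).1
      (vol_hex hc ha hb hC ha' hb' hC' hx hy hz h3)

lemma hex_nonneg {H : Set (Fin 2 → ℝ)} {A B C : Fin 2 → ℝ} (K : Set (Fin 2 → ℝ))
    (h : Hyp H A B C) (hx : 0 ≤ dd A B) (hy : 0 ≤ dd B C) (hz : 0 ≤ dd A C)
    (hn : 0 < dd A B + dd B C + dd A C)
    (hKc : Convex ℝ K) (hKs : K = -K) (hKH : K ⊆ H) :
    ∃ M : Matrix (Fin 2) (Fin 2) ℝ, IsLatticePacking M K ∧ covol M ≤ (volume H).toReal := by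
  obtain ⟨hc, hfin, a, b, c, a', b', c', bd⟩ := h
  have aa : ∀ u, dd u u = 0 := by intro u; simp [dd]; ring
  have sw : ∀ u v, dd u v = - dd v u := by intro u v; simp only [dd]; ring
  have sb : ∀ u v w, dd u (v - w) = dd u v - dd u w := by intro u v w; simp [dd]; ring
  have ng : ∀ u v, dd u (-v) = - dd u v := by intro u v; simp [dd]; ring
  have sBA := sw B A
  have sCA := sw C A
  have sCB := sw C B
  by_cases c1 : dd B C + dd A C < dd A B
  · refine core (A := A) (B := A) (C := B) K hc hfin a a b a' a' b' (aa A).ge (by linarith)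
      (by linarith) (by rw [aa]; linarith) (by rw [aa]; linarith) (by rw [aa]; linarith)
      ?_ ?_ ?_ hKc hKs hKH
    · intro w _; rw [sb, sub_self, abs_zero, aa]
    all_goals
      apply bd <;> simp only [sb, ng, aa] <;> rw [abs_le] <;> constructor <;> linarith
  by_cases c2 : dd A B + dd A C < dd B C
  · refine core (A := B) (B := B) (C := C) K hc hfin b b c b' b' c' (aa B).ge (by linarith)
      (by linarith) (by rw [aa]; linarith) (by rw [aa]; linarith) (by rw [aa]; linarith)
      ?_ ?_ ?_ hKc hKs hKH
    · intro w _; rw [sb, sub_self, abs_zero, aa]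
    all_goals
      apply bd <;> simp only [sb, ng, aa] <;> rw [abs_le] <;> constructor <;> linarith
  by_cases c3 : dd A B + dd B C < dd A C
  · refine core (A := A) (B := A) (C := C) K hc hfin a a c a' a' c' (aa A).ge (by linarith)
      (by linarith) (by rw [aa]; linarith) (by rw [aa]; linarith) (by rw [aa]; linarith)
      ?_ ?_ ?_ hKc hKs hKH
    · intro w _; rw [sb, sub_self, abs_zero, aa]
    all_goals
      apply bd <;> simp only [sb, ng, aa] <;> rw [abs_le] <;> constructor <;> linarith
  push Not at c1 c2 c3
  rcases hz.eq_or_lt with hz0 | hz0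
  · have sC : dd C (-A) = dd A C := by rw [ng]; linarith
    have sB : dd B (-A) = dd A B := by rw [ng]; linarith
    refine core (A := B) (B := C) (C := -A) K hc hfin b c a' b' c' (by simpa using a) hy
      (by linarith) (by linarith) (by linarith) (by linarith) (by linarith)
      ?_ ?_ ?_ hKc hKs hKH
    all_goals
      apply bd <;> simp only [sb, ng, aa] <;> rw [abs_le] <;> constructor <;> linarith
  · refine core (A := A) (B := B) (C := C) K hc hfin a b c a' b' c' hx hy hz0 c1 c2 c3
      ?_ ?_ ?_ hKc hKs hKH
    all_goals
      apply bd <;> simp only [sb, ng, aa] <;> rw [abs_le] <;> constructor <;> linarith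

lemma dd_neg_left (u v : Fin 2 → ℝ) : dd (-u) v = - dd u v := by simp [dd]; ring
lemma dd_neg_right (u v : Fin 2 → ℝ) : dd u (-v) = - dd u v := by simp [dd]; ring
lemma dd_swap (u v : Fin 2 → ℝ) : dd u v = - dd v u := by simp only [dd]; ring

lemma Hyp.neg1 {H : Set (Fin 2 → ℝ)} {A B C : Fin 2 → ℝ} (h : Hyp H A B C) : Hyp H (-A) B C := by
  obtain ⟨hc, hfin, a, b, c, a', b', c', bd⟩ := h
  exact ⟨hc, hfin, a', b, c, by simpa using a, b', c', fun u r h1 h2 h3 =>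
    bd u r (by rwa [dd_neg_left, abs_neg] at h1) h2 h3⟩

lemma Hyp.rot {H : Set (Fin 2 → ℝ)} {A B C : Fin 2 → ℝ} (h : Hyp H A B C) : Hyp H B C A := by
  obtain ⟨hc, hfin, a, b, c, a', b', c', bd⟩ := h
  exact ⟨hc, hfin, b, c, a, b', c', a', fun u r h1 h2 h3 => bd u r h3 h1 h2⟩

lemma Hyp.swap {H : Set (Fin 2 → ℝ)} {A B C : Fin 2 → ℝ} (h : Hyp H A B C) : Hyp H C B A := by
  obtain ⟨hc, hfin, a, b, c, a', b', c', bd⟩ := h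
  exact ⟨hc, hfin, c, b, a, c', b', a', fun u r h1 h2 h3 => bd u r h3 h2 h1⟩

lemma hex_even {H : Set (Fin 2 → ℝ)} {A B C : Fin 2 → ℝ} (K : Set (Fin 2 → ℝ))
    (h : Hyp H A B C) (hn : 0 < |dd A B| + |dd B C| + |dd A C|)
    (hp : (0 ≤ dd A B ∧ 0 ≤ dd B C ∧ 0 ≤ dd A C) ∨ (dd A B ≤ 0 ∧ dd B C ≤ 0 ∧ 0 ≤ dd A C) ∨
      (dd A B ≤ 0 ∧ 0 ≤ dd B C ∧ dd A C ≤ 0) ∨ (0 ≤ dd A B ∧ dd B C ≤ 0 ∧ dd A C ≤ 0))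
    (hKc : Convex ℝ K) (hKs : K = -K) (hKH : K ⊆ H) :
    ∃ M : Matrix (Fin 2) (Fin 2) ℝ, IsLatticePacking M K ∧ covol M ≤ (volume H).toReal := by
  rcases hp with ⟨h1, h2, h3⟩ | ⟨h1, h2, h3⟩ | ⟨h1, h2, h3⟩ | ⟨h1, h2, h3⟩
  · rw [abs_of_nonneg h1, abs_of_nonneg h2, abs_of_nonneg h3] at hn
    exact hex_nonneg K h h1 h2 h3 hn hKc hKs hKH
  · rw [abs_of_nonpos h1, abs_of_nonpos h2, abs_of_nonneg h3] at hn
    refine hex_nonneg K h.rot.neg1.rot.rot ?_ ?_ ?_ ?_ hKc hKs hKH <;>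
      (try simp only [dd_neg_left, dd_neg_right]) <;> linarith
  · rw [abs_of_nonpos h1, abs_of_nonneg h2, abs_of_nonpos h3] at hn
    refine hex_nonneg K h.neg1 ?_ ?_ ?_ ?_ hKc hKs hKH <;>
      (try simp only [dd_neg_left, dd_neg_right]) <;> linarith
  · rw [abs_of_nonneg h1, abs_of_nonpos h2, abs_of_nonpos h3] at hn
    refine hex_nonneg K h.rot.rot.neg1.rot ?_ ?_ ?_ ?_ hKc hKs hKH <;>
      (try simp only [dd_neg_left, dd_neg_right]) <;> linarith

lemma hex_all {H : Set (Fin 2 → ℝ)} {A B C : Fin 2 → ℝ} (K : Set (Fin 2 → ℝ))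
    (h : Hyp H A B C) (hn : 0 < |dd A B| + |dd B C| + |dd A C|)
    (hKc : Convex ℝ K) (hKs : K = -K) (hKH : K ⊆ H) :
    ∃ M : Matrix (Fin 2) (Fin 2) ℝ, IsLatticePacking M K ∧ covol M ≤ (volume H).toReal := by
  have hn' : 0 < |dd C B| + |dd B A| + |dd C A| := by
    rw [dd_swap C B, dd_swap B A, dd_swap C A, abs_neg, abs_neg, abs_neg]; linarith
  have e1 := dd_swap C B
  have e2 := dd_swap B A
  have e3 := dd_swap C A
  by_cases hp : (0 ≤ dd A B ∧ 0 ≤ dd B C ∧ 0 ≤ dd A C) ∨ (dd A B ≤ 0 ∧ dd B C ≤ 0 ∧ 0 ≤ dd A C) ∨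
      (dd A B ≤ 0 ∧ 0 ≤ dd B C ∧ dd A C ≤ 0) ∨ (0 ≤ dd A B ∧ dd B C ≤ 0 ∧ dd A C ≤ 0)
  · exact hex_even K h hn hp hKc hKs hKH
  · refine hex_even K h.swap hn' ?_ hKc hKs hKH
    rw [e1, e2, e3]
    simp only [neg_nonneg, neg_nonpos]
    rcases le_total 0 (dd A B) with h1 | h1 <;> rcases le_total 0 (dd B C) with h2 | h2 <;>
      rcases le_total 0 (dd A C) with h3 | h3 <;>
      first
        | (simp [h1, h2, h3]; done)
        | (exfalso; apply hp; simp [h1, h2, h3]; done)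

lemma par_of_dd {u v : Fin 2 → ℝ} (hu : u ≠ 0) (h : dd u v = 0) : ∃ r : ℝ, v = r • u := by
  unfold dd at h
  by_cases h0 : u 0 = 0
  · have h1 : u 1 ≠ 0 := by
      intro h1; apply hu; ext i; fin_cases i <;> simpa
    refine ⟨v 1 / u 1, ?_⟩
    rw [h0] at h
    have : v 0 = 0 := by
      have : u 1 * v 0 = 0 := by linarith
      exact (mul_eq_zero.1 this).resolve_left h1
    ext i; fin_cases i
    · simp [h0, this]
    · simp; field_simp
  · refine ⟨v 0 / u 0, ?_⟩
    ext i; fin_cases i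
    · simp; field_simp
    · simp; field_simp; linarith

lemma collinear_hull (A B C v : Fin 2 → ℝ) (a : ∃ r : ℝ, A = r • v) (b : ∃ r : ℝ, B = r • v)
    (c : ∃ r : ℝ, C = r • v) : Collinear ℝ (convexHull ℝ {A, B, C, -A, -B, -C}) := by
  rw [collinear_iff_exists_forall_eq_smul_vadd]
  refine ⟨0, v, ?_⟩
  have hsub : convexHull ℝ {A, B, C, -A, -B, -C} ⊆ (Submodule.span ℝ {v} : Set (Fin 2 → ℝ)) := by
    apply convexHull_min _ (Submodule.convex _)
    obtain ⟨r, rfl⟩ := a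
    obtain ⟨s, rfl⟩ := b
    obtain ⟨t, rfl⟩ := c
    have key : ∀ r : ℝ, r • v ∈ Submodule.span ℝ {v} := fun r =>
      Submodule.smul_mem _ _ (Submodule.mem_span_singleton_self v)
    rintro w (rfl | rfl | rfl | rfl | rfl | rfl)
    · exact key _
    · exact key _
    · exact key _
    · exact Submodule.neg_mem _ (key _)
    · exact Submodule.neg_mem _ (key _)
    · exact Submodule.neg_mem _ (key _)
  intro p hp
  obtain ⟨r, hr⟩ := Submodule.mem_span_singleton.1 (hsub hp)
  exact ⟨r, by simp [hr]⟩

lemma hyp_hull (A B C : Fin 2 → ℝ) : Hyp (convexHull ℝ {A, B, C, -A, -B, -C}) A B C := by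
  refine ⟨convex_convexHull _ _, ?_, ?_, ?_, ?_, ?_, ?_, ?_, ?_⟩
  · have : IsCompact (convexHull ℝ ({A, B, C, -A, -B, -C} : Set (Fin 2 → ℝ))) :=
      (Set.toFinite _).isCompact_convexHull ℝ
    exact this.measure_lt_top.ne
  iterate 6 exact subset_convexHull _ _ (by simp)
  intro u r h1 h2 h3
  have hcv : Convex ℝ {w : Fin 2 → ℝ | |dd w u| ≤ r} := by
    intro p hp q hq a b ha hb hab
    simp only [Set.mem_ofPred_eq] at *
    have : dd (a • p + b • q) u = a * dd p u + b * dd q u := by simp [dd]; ring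
    rw [this]
    rw [abs_le] at *
    constructor <;> nlinarith
  apply convexHull_min _ hcv
  rintro w (rfl | rfl | rfl | rfl | rfl | rfl) <;>
    simp only [Set.mem_ofPred_eq, dd_neg_left, abs_neg] <;> assumption

lemma hex_main {A B C : Fin 2 → ℝ} (K : Set (Fin 2 → ℝ))
    (hn : ¬ Collinear ℝ (convexHull ℝ {A, B, C, -A, -B, -C}))
    (hKc : Convex ℝ K) (hKs : K = -K) (hKH : K ⊆ convexHull ℝ {A, B, C, -A, -B, -C}) :
    ∃ M : Matrix (Fin 2) (Fin 2) ℝ, IsLatticePacking M K ∧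
      covol M ≤ (volume (convexHull ℝ {A, B, C, -A, -B, -C})).toReal := by
  refine hex_all K (hyp_hull A B C) ?_ hKc hKs hKH
  by_contra hcon
  apply hn
  have p1 := abs_nonneg (dd A B)
  have p2 := abs_nonneg (dd B C)
  have p3 := abs_nonneg (dd A C)
  have q1 : dd A B = 0 := abs_eq_zero.1 (by linarith)
  have q2 : dd B C = 0 := abs_eq_zero.1 (by linarith)
  have q3 : dd A C = 0 := abs_eq_zero.1 (by linarith)
  by_cases hA : A = 0
  · by_cases hB : B = 0
    · exact collinear_hull A B C C ⟨0, by simp [hA]⟩ ⟨0, by simp [hB]⟩ ⟨1, by simp⟩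
    · exact collinear_hull A B C B ⟨0, by simp [hA]⟩ ⟨1, by simp⟩ (par_of_dd hB q2)
  · exact collinear_hull A B C A ⟨1, by simp⟩ (par_of_dd hA q1) (par_of_dd hA q3)

/-- If a centrally symmetric planar convex body `C` is contained in a
centrally symmetric convex hexagon or parallelogram `H'`, then `C` admits a
lattice packing of covolume at most `|H'|`; equivalently
`δ_L(C) ≥ |C| / |H'|`. -/
theorem exists_latticePacking_covol_le_of_subset_symmHexagon
    (H' C : Set (Fin 2 → ℝ))
    (hH : IsSymmHexagon H' ∨ IsParallelogram H')
    (hCcompact : IsCompact C) (hCconv : Convex ℝ C)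
    (hCint : (interior C).Nonempty) (hCsymm : C = -C)
    (hCH : C ⊆ H') :
    ∃ M : Matrix (Fin 2) (Fin 2) ℝ, IsLatticePacking M C ∧
      covol M ≤ (volume H').toReal := by
  rcases hH with ⟨A, rfl, hn⟩ | ⟨B, B', rfl, hn⟩
  · exact hex_main C hn hCconv hCsymm hCH
  · have e : ({B, B', -B, -B'} : Set (Fin 2 → ℝ)) = {B, B', B', -B, -B', -B'} := by
      ext w; simp
    rw [e] at hn hCH ⊢
    exact hex_main C hn hCconv hCsymm hCH
end
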